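/- arXiv:1806.04901 — 3 statements merged into one kernel-verified Lean document; each statement's English description precedes it below -/
import Mathlib

section
/- Let 1 ≤ p < N and let Ω ⊆ ℝ^N be a domain. Then for every u ∈ C_c^∞(Ω), ((N−p)/p)^p · ∫_Ω |u(x)|^p / H⁰(x)^p dx ≤ ∫_Ω |(x/H⁰(x)) · ∇u(x)|^p dx. -/
open MeasureTheory Set Filter
open scoped RealInnerProductSpace Topology ENNReal NNReal

noncomputable section

/-- `ℝ^N` as a Euclidean space. -/
abbrev Euc (N : ℕ) := EuclideanSpace ℝ (Fin N)

/-- `H : ℝ^N → ℝ` is a Finsler norm: nonnegative, convex, `C²` away from the origin,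
even and positively one-homogeneous, comparable to the Euclidean norm, and with
positive definite Hessian of `H²` away from the origin. -/
structure IsFinslerNorm {N : ℕ} (H : Euc N → ℝ) : Prop where
  nonneg : ∀ ξ, 0 ≤ H ξ
  convexOn : ConvexOn ℝ Set.univ H
  smooth : ContDiffOn ℝ 2 H {(0 : Euc N)}ᶜ
  homog : ∀ (t : ℝ) (ξ : Euc N), H (t • ξ) = |t| * H ξ
  bounds : ∃ a b : ℝ, 0 < a ∧ a ≤ b ∧ ∀ ξ : Euc N, a * ‖ξ‖ ≤ H ξ ∧ H ξ ≤ b * ‖ξ‖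
  hessPosDef : ∀ ξ : Euc N, ξ ≠ 0 → ∀ v : Euc N, v ≠ 0 →
    0 < iteratedFDeriv ℝ 2 (fun x => (H x) ^ 2) ξ ![v, v]

/-- The polar function `H⁰(x) = sup_{ξ ≠ 0} (ξ·x)/H(ξ)` of a Finsler norm. -/
def polarNorm {N : ℕ} (H : Euc N → ℝ) (x : Euc N) : ℝ :=
  sSup {r : ℝ | ∃ ξ : Euc N, ξ ≠ 0 ∧ r = ⟪ξ, x⟫ / H ξ}

/-- `u ∈ C_c^∞(Ω)`: a smooth function with compact support contained in `Ω`. -/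
def IsTestFun {N : ℕ} (Ω : Set (Euc N)) (u : Euc N → ℝ) : Prop :=
  ContDiff ℝ (⊤ : ℕ∞) u ∧ HasCompactSupport u ∧ tsupport u ⊆ Ω

/-!
By homogeneity `x / H⁰(x)` is constant along rays, so the fundamental theorem of calculus gives
`u(x) / H⁰(x) = -∫_1^∞ g(t x) dt` for the radial derivative `g(y) = (y / H⁰(y)) · ∇u(y)`.
Dilation by `t` multiplies the `L^p(ℝ^N)` norm by `t^{-N/p}`, hence Minkowski's integral inequality
bounds the `L^p` norm of `u / H⁰` by `∫_1^∞ t^{-N/p} dt = p / (N - p)` times that of `g`.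
-/

/-! ### Minkowski's integral inequality -/

section Minkowski

variable {α β : Type*} {mα : MeasurableSpace α} {mβ : MeasurableSpace β}
  {μ : Measure α} {ν : Measure β} {p : ℝ}

lemma rpow_lintegral_le_measure_univ_mul_lintegral_rpow (hp : 1 ≤ p) {f : β → ℝ≥0∞}
    (hf : Measurable f) :
    (∫⁻ t, f t ∂ν) ^ p ≤ ν univ ^ (p - 1) * ∫⁻ t, f t ^ p ∂ν := by
  have hp0 : 0 < p := one_pos.trans_le hp
  have h := eLpNorm'_le_eLpNorm'_mul_rpow_measure_univ one_pos hp
    (hf.aestronglyMeasurable (μ := ν))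
  simp only [eLpNorm', enorm_eq_self, ENNReal.rpow_one, div_one] at h
  calc (∫⁻ t, f t ∂ν) ^ p
      ≤ ((∫⁻ t, f t ^ p ∂ν) ^ (1 / p) * ν univ ^ (1 - 1 / p)) ^ p := by gcongr
    _ = ν univ ^ (p - 1) * ∫⁻ t, f t ^ p ∂ν := by
      rw [ENNReal.mul_rpow_of_nonneg _ _ hp0.le, ← ENNReal.rpow_mul, ← ENNReal.rpow_mul,
        one_div_mul_cancel hp0.ne', ENNReal.rpow_one, sub_mul, one_div_mul_cancel hp0.ne',
        one_mul, mul_comm]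

lemma lintegral_rpow_lintegral_le_measure_univ_rpow [SFinite μ] [SFinite ν] (hp : 1 ≤ p)
    {F : α → β → ℝ≥0∞} (hF : Measurable (Function.uncurry F))
    (hF1 : ∀ᵐ t ∂ν, ∫⁻ x, F x t ^ p ∂μ ≤ 1) :
    ∫⁻ x, (∫⁻ t, F x t ∂ν) ^ p ∂μ ≤ ν univ ^ p := by
  have hinner : Measurable fun x => ∫⁻ t, F x t ^ p ∂ν := (hF.pow_const p).lintegral_prod_right'
  calc ∫⁻ x, (∫⁻ t, F x t ∂ν) ^ p ∂μ
      ≤ ∫⁻ x, ν univ ^ (p - 1) * ∫⁻ t, F x t ^ p ∂ν ∂μ := lintegral_mono fun _ =>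
        rpow_lintegral_le_measure_univ_mul_lintegral_rpow hp hF.of_uncurry_left
    _ = ν univ ^ (p - 1) * ∫⁻ t, ∫⁻ x, F x t ^ p ∂μ ∂ν := by
      rw [lintegral_const_mul _ hinner,
        lintegral_lintegral_swap (hF.pow_const p).aemeasurable]
    _ ≤ ν univ ^ (p - 1) * ∫⁻ _, 1 ∂ν := by
      gcongr 1
      exact lintegral_mono_ae hF1
    _ = ν univ ^ p := by
      rw [lintegral_one]
      nth_rw 2 [← ENNReal.rpow_one (ν univ)]
      rw [← ENNReal.rpow_add_of_nonneg _ _ (by linarith) zero_le_one, sub_add_cancel]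

lemma lintegral_withDensity_div_eq {f φ : β → ℝ≥0∞} (hf : Measurable f) (hφ : Measurable φ)
    (hfin : ∀ᵐ t ∂ν, φ t ≠ ∞) (hzero : ∀ᵐ t ∂ν, φ t = 0 → f t = 0) :
    ∫⁻ t, f t / φ t ∂ν.withDensity φ = ∫⁻ t, f t ∂ν := by
  have hdiv : Measurable fun t => f t / φ t := hf.div hφ
  rw [lintegral_withDensity_eq_lintegral_mul _ hφ hdiv]
  refine lintegral_congr_ae ?_
  filter_upwards [hfin, hzero] with t ht ht0
  exact ENNReal.mul_div_cancel' ht0 fun h => absurd h ht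

lemma ae_ae_eq_zero_of_eLpNorm'_eq_zero [SFinite μ] [SFinite ν] (hp : 0 < p)
    {F : α → β → ℝ≥0∞} (hF : Measurable (Function.uncurry F)) :
    ∀ᵐ x ∂μ, ∀ᵐ t ∂ν, eLpNorm' (F · t) p μ = 0 → F x t = 0 := by
  have hnorm : Measurable fun t => eLpNorm' (F · t) p μ :=
    (hF.pow_const p).lintegral_prod_left'.pow_const _
  have hset : MeasurableSet {z : α × β | eLpNorm' (F · z.2) p μ = 0 → F z.1 z.2 = 0} :=
    .imp (hnorm.comp measurable_snd (measurableSet_singleton 0)) (hF (measurableSet_singleton 0))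
  rw [Measure.ae_ae_comm hset]
  refine ae_of_all _ fun t => ?_
  by_cases ht : eLpNorm' (F · t) p μ = 0
  · filter_upwards [(eLpNorm'_eq_zero_iff hp hF.of_uncurry_right.aestronglyMeasurable).1 ht]
      with x hx _ using hx
  · exact ae_of_all _ fun x h => absurd h ht

theorem eLpNorm'_lintegral_le [SFinite μ] [SFinite ν] (hp : 1 ≤ p)
    {F : α → β → ℝ≥0∞} (hF : Measurable (Function.uncurry F)) :
    eLpNorm' (fun x => ∫⁻ t, F x t ∂ν) p μ ≤ ∫⁻ t, eLpNorm' (F · t) p μ ∂ν := by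
  have hp0 : 0 < p := one_pos.trans_le hp
  -- `∫ F dν` is the integral of the normalized `F / φ` against the measure `φ dν`, whose total mass
  -- is the right-hand side.
  set φ : β → ℝ≥0∞ := fun t => eLpNorm' (F · t) p μ
  have hφ : Measurable φ := (hF.pow_const p).lintegral_prod_left'.pow_const _
  obtain hφ_top | hφ_top := eq_or_ne (∫⁻ t, φ t ∂ν) ∞
  · exact hφ_top ▸ le_top
  have hφ_fin : ∀ᵐ t ∂ν, φ t ≠ ∞ := (ae_lt_top hφ hφ_top).mono fun _ => LT.lt.ne
  have hdiv : ∀ᵐ x ∂μ, ∫⁻ t, F x t / φ t ∂ν.withDensity φ = ∫⁻ t, F x t ∂ν := by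
    filter_upwards [ae_ae_eq_zero_of_eLpNorm'_eq_zero (ν := ν) hp0 hF] with x hx
    exact lintegral_withDensity_div_eq hF.of_uncurry_left hφ hφ_fin hx
  have hnormalized : ∀ᵐ t ∂ν.withDensity φ, ∫⁻ x, (F x t / φ t) ^ p ∂μ ≤ 1 := by
    refine ae_of_all _ fun t => ?_
    simp only [div_eq_mul_inv, ENNReal.mul_rpow_of_nonneg _ _ hp0.le]
    rw [lintegral_mul_const _ (hF.of_uncurry_right.pow_const p), ENNReal.inv_rpow]
    have hφp : ∫⁻ x, F x t ^ p ∂μ = φ t ^ p :=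
      lintegral_rpow_enorm_eq_rpow_eLpNorm' (f := (F · t)) hp0
    rw [hφp]
    exact ENNReal.mul_inv_le_one _
  rw [eLpNorm', one_div, ENNReal.rpow_inv_le_iff hp0]
  calc ∫⁻ x, ‖∫⁻ t, F x t ∂ν‖ₑ ^ p ∂μ
      = ∫⁻ x, (∫⁻ t, F x t / φ t ∂ν.withDensity φ) ^ p ∂μ :=
        lintegral_congr_ae (hdiv.mono fun x hx => by simp only [hx, enorm_eq_self])
    _ ≤ ν.withDensity φ univ ^ p := lintegral_rpow_lintegral_le_measure_univ_rpow hp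
        (hF.div (hφ.comp measurable_snd)) hnormalized
    _ = (∫⁻ t, φ t ∂ν) ^ p := by rw [withDensity_apply _ .univ, Measure.restrict_univ]

end Minkowski

/-! ### Averages over dilations -/

lemma lintegral_Ioi_ofReal_rpow {a c : ℝ} (ha : a < -1) (hc : 0 < c) :
    ∫⁻ t in Ioi c, ENNReal.ofReal (t ^ a) = ENNReal.ofReal (-c ^ (a + 1) / (a + 1)) := by
  rw [← integral_Ioi_rpow_of_lt ha hc,
    ofReal_integral_eq_lintegral_ofReal (integrableOn_Ioi_rpow_of_lt ha hc)]
  filter_upwards [ae_restrict_mem measurableSet_Ioi] with t ht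
  exact Real.rpow_nonneg (hc.trans ht).le a

section Dilation

variable {E : Type*} [NormedAddCommGroup E] [NormedSpace ℝ E] [FiniteDimensional ℝ E]
  [MeasurableSpace E] [BorelSpace E] {μ : Measure E} [μ.IsAddHaarMeasure] {p : ℝ}

lemma lintegral_comp_smul (G : E → ℝ≥0∞) {t : ℝ} (ht : t ≠ 0) :
    ∫⁻ x, G (t • x) ∂μ =
      ENNReal.ofReal |(t ^ Module.finrank ℝ E)⁻¹| * ∫⁻ x, G x ∂μ := by
  rw [← (measurableEmbedding_const_smul₀ ht).lintegral_map, Measure.map_addHaar_smul μ ht,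
    lintegral_smul_measure, smul_eq_mul]

lemma eLpNorm'_comp_smul (hp : 0 < p) (G : E → ℝ≥0∞) {t : ℝ} (ht : 0 < t) :
    eLpNorm' (fun x => G (t • x)) p μ =
      ENNReal.ofReal (t ^ (-(Module.finrank ℝ E / p))) * eLpNorm' G p μ := by
  simp only [eLpNorm', enorm_eq_self]
  rw [lintegral_comp_smul (fun x => G x ^ p) ht.ne', ENNReal.mul_rpow_of_nonneg _ _ (by positivity),
    ENNReal.ofReal_rpow_of_nonneg (abs_nonneg _) (by positivity), abs_of_pos (by positivity),
    ← Real.rpow_natCast, ← Real.rpow_neg ht.le, ← Real.rpow_mul ht.le, neg_mul, mul_one_div]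

theorem eLpNorm'_lintegral_comp_smul_le (hp : 1 ≤ p) (hpE : p < Module.finrank ℝ E)
    {G : E → ℝ≥0∞} (hG : Measurable G) :
    eLpNorm' (fun x => ∫⁻ t in Ioi (1 : ℝ), G (t • x)) p μ ≤
      ENNReal.ofReal (p / (Module.finrank ℝ E - p)) * eLpNorm' G p μ := by
  have hp0 : 0 < p := one_pos.trans_le hp
  set n := (Module.finrank ℝ E : ℝ)
  have hexp : -(n / p) < -1 := neg_lt_neg ((one_lt_div hp0).2 hpE)
  have hsum : -(n / p) + 1 = -((n - p) / p) := by rw [sub_div, div_self hp0.ne']; ring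
  calc eLpNorm' (fun x => ∫⁻ t in Ioi (1 : ℝ), G (t • x)) p μ
      ≤ ∫⁻ t in Ioi (1 : ℝ), eLpNorm' (fun x => G (t • x)) p μ :=
        eLpNorm'_lintegral_le hp (hG.comp (measurable_snd.smul measurable_fst))
    _ = ∫⁻ t in Ioi (1 : ℝ), ENNReal.ofReal (t ^ (-(n / p))) * eLpNorm' G p μ :=
        setLIntegral_congr_fun measurableSet_Ioi fun t ht =>
          eLpNorm'_comp_smul hp0 G (one_pos.trans ht)
    _ = ENNReal.ofReal (p / (n - p)) * eLpNorm' G p μ := by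
        rw [lintegral_mul_const _ (by fun_prop), lintegral_Ioi_ofReal_rpow hexp one_pos,
          Real.one_rpow, hsum, neg_div_neg_eq, one_div_div]

end Dilation

/-! ### The radial derivative -/

lemma enorm_le_lintegral_Ioi_enorm_deriv {F : Type*} [NormedAddCommGroup F] [NormedSpace ℝ F]
    {f : ℝ → F} (hf : ContDiff ℝ 1 f) (hfs : HasCompactSupport f) (b : ℝ) :
    ‖f b‖ₑ ≤ ∫⁻ t in Ioi b, ‖deriv f t‖ₑ := by
  have h : ‖f (- -b)‖ₑ ≤ ∫⁻ t in Iic (-b), ‖deriv (fun s => f (-s)) t‖ₑ :=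
    HasCompactSupport.enorm_le_lintegral_Ici_deriv (hf.comp contDiff_neg)
      (hfs.comp_homeomorph (Homeomorph.neg ℝ)) (-b)
  have hpre : (Neg.neg : ℝ → ℝ) ⁻¹' Ici b = Iic (-b) := by simp
  simp only [deriv_comp_neg, enorm_neg, neg_neg] at h
  rwa [← hpre, (Measure.measurePreserving_neg (volume : Measure ℝ)).setLIntegral_comp_preimage_emb
    (MeasurableEquiv.neg ℝ).measurableEmbedding (fun t => ‖deriv f t‖ₑ),
    setLIntegral_congr Ioi_ae_eq_Ici.symm] at h

lemma integral_norm_rpow_eq_toReal_eLpNorm'_rpow {α F : Type*} [NormedAddCommGroup F]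
    {mα : MeasurableSpace α} {μ : Measure α} {f : α → F} (hf : AEStronglyMeasurable f μ) {p : ℝ}
    (hp : 0 < p) :
    ∫ x, ‖f x‖ ^ p ∂μ = (eLpNorm' f p μ).toReal ^ p := by
  rw [ENNReal.toReal_rpow, ← lintegral_rpow_enorm_eq_rpow_eLpNorm' hp,
    ← integral_toReal (hf.enorm.pow_const p)
      (ae_of_all μ fun x => ENNReal.rpow_lt_top_of_nonneg hp.le enorm_ne_top)]
  simp only [← ENNReal.toReal_rpow, toReal_enorm]

section Radial

variable {E F : Type*} [NormedAddCommGroup E] [NormedSpace ℝ E] [NormedAddCommGroup F]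
  [NormedSpace ℝ F] {K : E → ℝ} {u : E → F}

/-- The derivative of `u` at `x` in the direction `x / K x`, for a gauge `K` on `E`. At points where
`K x = 0` it takes the value `0`. -/
def radialDeriv (K : E → ℝ) (u : E → F) (x : E) : F := fderiv ℝ u x ((K x)⁻¹ • x)

lemma radialDeriv_smul (hK : ∀ t > 0, ∀ x, K (t • x) = t * K x) {t : ℝ} (ht : 0 < t) (x : E) :
    radialDeriv K u (t • x) = (K x)⁻¹ • fderiv ℝ u (t • x) x := by
  rw [radialDeriv, hK t ht, smul_smul, mul_inv_rev, inv_mul_cancel_right₀ ht.ne', map_smul]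

lemma norm_radialDeriv_le {c : ℝ} (hc : 0 < c) (hcK : ∀ x, c * ‖x‖ ≤ K x) (x : E) :
    ‖radialDeriv K u x‖ ≤ c⁻¹ * ‖fderiv ℝ u x‖ := by
  have hKx : 0 ≤ K x := (by positivity : 0 ≤ c * ‖x‖).trans (hcK x)
  have hdir : ‖(K x)⁻¹ • x‖ ≤ c⁻¹ := by
    rw [norm_smul, norm_inv, Real.norm_of_nonneg hKx]
    refine inv_mul_le_of_le_mul₀ hKx (by positivity) ?_
    rw [mul_comm, ← div_eq_inv_mul, le_div_iff₀ hc, mul_comm]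
    exact hcK x
  calc ‖radialDeriv K u x‖ ≤ ‖fderiv ℝ u x‖ * ‖(K x)⁻¹ • x‖ := (fderiv ℝ u x).le_opNorm _
    _ ≤ c⁻¹ * ‖fderiv ℝ u x‖ := by rw [mul_comm]; gcongr

lemma radialDeriv_eq_zero_of_notMem_tsupport {x : E} (hx : x ∉ tsupport u) :
    radialDeriv K u x = 0 := by
  rw [radialDeriv, image_eq_zero_of_notMem_tsupport (mt (tsupport_fderiv_subset ℝ ·) hx),
    zero_apply]

lemma enorm_le_lintegral_enorm_fderiv_ray (hu : ContDiff ℝ 1 u) (hus : HasCompactSupport u)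
    {x : E} (hx : x ≠ 0) :
    ‖u x‖ₑ ≤ ∫⁻ t in Ioi (1 : ℝ), ‖fderiv ℝ u (t • x) x‖ₑ := by
  have hderiv (t : ℝ) : deriv (fun s : ℝ => u (s • x)) t = fderiv ℝ u (t • x) x := by
    have hray : HasDerivAt (fun s : ℝ => s • x) x t := by
      simpa only [id_eq, one_smul] using (hasDerivAt_id' t).smul_const x
    exact ((hu.differentiable one_ne_zero _).hasFDerivAt.comp_hasDerivAt t hray).deriv
  simpa only [hderiv, one_smul] using enorm_le_lintegral_Ioi_enorm_deriv
    (f := fun s : ℝ => u (s • x)) (hu.comp (contDiff_id.smul contDiff_const))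
    (hus.comp_isClosedEmbedding (isClosedEmbedding_smul_left hx)) 1

lemma enorm_inv_smul_le_lintegral_radialDeriv (hK : ∀ t > 0, ∀ x, K (t • x) = t * K x)
    (hu : ContDiff ℝ 1 u) (hus : HasCompactSupport u) (x : E) :
    ‖(K x)⁻¹ • u x‖ₑ ≤ ∫⁻ t in Ioi (1 : ℝ), ‖radialDeriv K u (t • x)‖ₑ := by
  obtain rfl | hx := eq_or_ne x 0
  · have hK0 : K 0 = 0 := by have := hK 2 two_pos 0; rw [smul_zero] at this; linarith
    simp [hK0]
  calc ‖(K x)⁻¹ • u x‖ₑ = ‖(K x)⁻¹‖ₑ * ‖u x‖ₑ := enorm_smul _ _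
    _ ≤ ‖(K x)⁻¹‖ₑ * ∫⁻ t in Ioi (1 : ℝ), ‖fderiv ℝ u (t • x) x‖ₑ := by
        gcongr
        exact enorm_le_lintegral_enorm_fderiv_ray hu hus hx
    _ = ∫⁻ t in Ioi (1 : ℝ), ‖(K x)⁻¹‖ₑ * ‖fderiv ℝ u (t • x) x‖ₑ :=
        (lintegral_const_mul' _ _ enorm_ne_top).symm
    _ = ∫⁻ t in Ioi (1 : ℝ), ‖radialDeriv K u (t • x)‖ₑ :=
        setLIntegral_congr_fun measurableSet_Ioi fun t ht => by
          simp only [radialDeriv_smul hK (one_pos.trans ht), enorm_smul]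

variable [MeasurableSpace E] [BorelSpace E] [FiniteDimensional ℝ E]

lemma stronglyMeasurable_radialDeriv (hK : Measurable K) (hu : ContDiff ℝ 1 u) :
    StronglyMeasurable (radialDeriv K u) :=
  isBoundedBilinearMap_apply.continuous.comp_stronglyMeasurable
    ((hu.continuous_fderiv one_ne_zero).stronglyMeasurable.prodMk
      (hK.inv.smul measurable_id).stronglyMeasurable)

variable {μ : Measure E} {p : ℝ}

lemma eLpNorm'_radialDeriv_lt_top [IsFiniteMeasureOnCompacts μ] (hKm : Measurable K)
    {c : ℝ} (hc : 0 < c) (hcK : ∀ x, c * ‖x‖ ≤ K x) (hu : ContDiff ℝ 1 u)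
    (hus : HasCompactSupport u) (hp : 0 < p) :
    eLpNorm' (radialDeriv K u) p μ < ∞ := by
  have hfderiv : MemLp (fderiv ℝ u) (ENNReal.ofReal p) μ :=
    (hu.continuous_fderiv one_ne_zero).memLp_of_hasCompactSupport (hus.fderiv ℝ)
  have h := (hfderiv.of_le_mul (stronglyMeasurable_radialDeriv hKm hu).aestronglyMeasurable
    (ae_of_all μ (norm_radialDeriv_le hc hcK))).eLpNorm_lt_top
  rwa [eLpNorm_eq_eLpNorm' (ENNReal.ofReal_pos.2 hp).ne' ENNReal.ofReal_ne_top,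
    ENNReal.toReal_ofReal hp.le] at h

theorem eLpNorm'_inv_smul_le_mul_eLpNorm'_radialDeriv [μ.IsAddHaarMeasure] (hKm : Measurable K)
    (hK : ∀ t > 0, ∀ x, K (t • x) = t * K x) (hu : ContDiff ℝ 1 u) (hus : HasCompactSupport u)
    (hp : 1 ≤ p) (hpE : p < Module.finrank ℝ E) :
    eLpNorm' (fun x => (K x)⁻¹ • u x) p μ ≤
      ENNReal.ofReal (p / (Module.finrank ℝ E - p)) * eLpNorm' (radialDeriv K u) p μ := by
  calc eLpNorm' (fun x => (K x)⁻¹ • u x) p μ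
      ≤ eLpNorm' (fun x => ∫⁻ t in Ioi (1 : ℝ), ‖radialDeriv K u (t • x)‖ₑ) p μ :=
        eLpNorm'_mono_enorm_ae (zero_le_one.trans hp)
          (ae_of_all μ (enorm_inv_smul_le_lintegral_radialDeriv hK hu hus))
    _ ≤ ENNReal.ofReal (p / (Module.finrank ℝ E - p)) *
          eLpNorm' (fun x => ‖radialDeriv K u x‖ₑ) p μ :=
        eLpNorm'_lintegral_comp_smul_le hp hpE (stronglyMeasurable_radialDeriv hKm hu).enorm
    _ = _ := by simp only [eLpNorm', enorm_eq_self]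

theorem integral_norm_inv_smul_rpow_le [μ.IsAddHaarMeasure] (hKm : Measurable K)
    (hK : ∀ t > 0, ∀ x, K (t • x) = t * K x) {c : ℝ} (hc : 0 < c) (hcK : ∀ x, c * ‖x‖ ≤ K x)
    (hu : ContDiff ℝ 1 u) (hus : HasCompactSupport u) (hp : 1 ≤ p)
    (hpE : p < Module.finrank ℝ E) :
    ((Module.finrank ℝ E - p) / p) ^ p * ∫ x, ‖(K x)⁻¹ • u x‖ ^ p ∂μ ≤
      ∫ x, ‖radialDeriv K u x‖ ^ p ∂μ := by
  have hp0 : 0 < p := one_pos.trans_le hp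
  set C : ℝ := p / (Module.finrank ℝ E - p) with hC
  have hC0 : 0 < C := div_pos hp0 (sub_pos.2 hpE)
  have hLp : (eLpNorm' (fun x => (K x)⁻¹ • u x) p μ).toReal ≤
      C * (eLpNorm' (radialDeriv K u) p μ).toReal := by
    rw [← ENNReal.toReal_ofReal hC0.le, ← ENNReal.toReal_mul]
    have hfin := (eLpNorm'_radialDeriv_lt_top (μ := μ) hKm hc hcK hu hus hp0).ne
    exact ENNReal.toReal_mono (ENNReal.mul_ne_top ENNReal.ofReal_ne_top hfin)
      (eLpNorm'_inv_smul_le_mul_eLpNorm'_radialDeriv hKm hK hu hus hp hpE)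
  have hquot : StronglyMeasurable fun x => (K x)⁻¹ • u x :=
    hKm.inv.stronglyMeasurable.smul hu.continuous.stronglyMeasurable
  rw [integral_norm_rpow_eq_toReal_eLpNorm'_rpow hquot.aestronglyMeasurable hp0,
    integral_norm_rpow_eq_toReal_eLpNorm'_rpow
      (stronglyMeasurable_radialDeriv hKm hu).aestronglyMeasurable hp0,
    ← inv_div, ← hC, ← Real.mul_rpow (inv_nonneg.2 hC0.le) ENNReal.toReal_nonneg]
  gcongr
  rwa [inv_mul_le_iff₀ hC0]

end Radial

theorem finsler_hardy_subcritical_general {E F : Type*} [NormedAddCommGroup E] [NormedSpace ℝ E]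
    [FiniteDimensional ℝ E] [MeasurableSpace E] [BorelSpace E] [NormedAddCommGroup F]
    [NormedSpace ℝ F] {μ : Measure E} [μ.IsAddHaarMeasure] {K : E → ℝ} (hKm : Measurable K)
    (hK : ∀ t > 0, ∀ x, K (t • x) = t * K x) {c : ℝ} (hc : 0 < c) (hcK : ∀ x, c * ‖x‖ ≤ K x)
    {p : ℝ} (hp : 1 ≤ p) (hpE : p < Module.finrank ℝ E) {Ω : Set E} {u : E → F}
    (hu : ContDiff ℝ 1 u) (hus : HasCompactSupport u) (huΩ : tsupport u ⊆ Ω) :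
    ((Module.finrank ℝ E - p) / p) ^ p * ∫ x in Ω, ‖u x‖ ^ p / K x ^ p ∂μ ≤
      ∫ x in Ω, ‖radialDeriv K u x‖ ^ p ∂μ := by
  have hp0 : p ≠ 0 := (one_pos.trans_le hp).ne'
  have hK0 (x : E) : 0 ≤ K x := (by positivity : 0 ≤ c * ‖x‖).trans (hcK x)
  have hquot (x : E) : ‖u x‖ ^ p / K x ^ p = ‖(K x)⁻¹ • u x‖ ^ p := by
    rw [norm_smul, norm_inv, Real.norm_of_nonneg (hK0 x), ← div_eq_inv_mul,
      Real.div_rpow (norm_nonneg _) (hK0 x)]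
  simp only [hquot]
  rw [setIntegral_eq_integral_of_forall_compl_eq_zero fun x hx => by
      rw [image_eq_zero_of_notMem_tsupport (mt (@huΩ x) hx), smul_zero, norm_zero,
        Real.zero_rpow hp0],
    setIntegral_eq_integral_of_forall_compl_eq_zero fun x hx => by
      rw [radialDeriv_eq_zero_of_notMem_tsupport (mt (@huΩ x) hx), norm_zero, Real.zero_rpow hp0]]
  exact integral_norm_inv_smul_rpow_le hKm hK hc hcK hu hus hp hpE

/-! ### The polar function -/

section Polar

variable {N : ℕ} {H : Euc N → ℝ} {a b : ℝ}

lemma inner_div_le_inv_mul_norm (ha : 0 < a) (hHa : ∀ ξ, a * ‖ξ‖ ≤ H ξ) (ξ x : Euc N) :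
    ⟪ξ, x⟫ / H ξ ≤ a⁻¹ * ‖x‖ := by
  have hHξ : 0 ≤ H ξ := (by positivity : 0 ≤ a * ‖ξ‖).trans (hHa ξ)
  refine div_le_of_le_mul₀ hHξ (by positivity) ?_
  calc ⟪ξ, x⟫ ≤ ‖ξ‖ * ‖x‖ := real_inner_le_norm _ _
    _ = a⁻¹ * ‖x‖ * (a * ‖ξ‖) := by field_simp
    _ ≤ a⁻¹ * ‖x‖ * H ξ := by gcongr; exact hHa ξ

lemma inner_div_le_polarNorm (ha : 0 < a) (hHa : ∀ ξ, a * ‖ξ‖ ≤ H ξ) {ξ : Euc N} (hξ : ξ ≠ 0)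
    (x : Euc N) : ⟪ξ, x⟫ / H ξ ≤ polarNorm H x := by
  refine le_csSup ⟨a⁻¹ * ‖x‖, ?_⟩ ⟨ξ, hξ, rfl⟩
  rintro _ ⟨η, -, rfl⟩
  exact inner_div_le_inv_mul_norm ha hHa η x

lemma polarNorm_le_of_forall_inner_div_le {x : Euc N} {r : ℝ} (hr : 0 ≤ r)
    (h : ∀ ξ ≠ 0, ⟪ξ, x⟫ / H ξ ≤ r) : polarNorm H x ≤ r := by
  refine Real.sSup_le ?_ hr
  rintro _ ⟨ξ, hξ, rfl⟩
  exact h ξ hξ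

lemma polarNorm_nonneg (hH : ∀ ξ, 0 ≤ H ξ) (x : Euc N) : 0 ≤ polarNorm H x := by
  obtain rfl | hx := eq_or_ne x 0
  · refine Real.sSup_nonneg ?_
    rintro _ ⟨ξ, -, rfl⟩
    rw [inner_zero_right, zero_div]
  · exact Real.sSup_nonneg' ⟨_, ⟨x, hx, rfl⟩, div_nonneg real_inner_self_nonneg (hH x)⟩

lemma polarNorm_smul {t : ℝ} (ht : 0 ≤ t) (x : Euc N) :
    polarNorm H (t • x) = t * polarNorm H x := by
  rw [polarNorm, polarNorm, ← smul_eq_mul, ← Real.sSup_smul_of_nonneg ht]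
  congr 1
  ext r
  simp only [mem_ofPred_eq, mem_smul_set, real_inner_smul_right, mul_div_assoc, smul_eq_mul]
  exact ⟨fun ⟨ξ, hξ, hr⟩ => ⟨_, ⟨ξ, hξ, rfl⟩, hr.symm⟩,
    fun ⟨_, ⟨ξ, hξ, hs⟩, hr⟩ => ⟨ξ, hξ, hs ▸ hr.symm⟩⟩

lemma polarNorm_add_le (ha : 0 < a) (hHa : ∀ ξ, a * ‖ξ‖ ≤ H ξ) (x y : Euc N) :
    polarNorm H (x + y) ≤ polarNorm H x + polarNorm H y := by
  have hH (ξ : Euc N) : 0 ≤ H ξ := (by positivity : 0 ≤ a * ‖ξ‖).trans (hHa ξ)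
  refine polarNorm_le_of_forall_inner_div_le
    (add_nonneg (polarNorm_nonneg hH x) (polarNorm_nonneg hH y)) fun ξ hξ => ?_
  rw [inner_add_right, add_div]
  exact add_le_add (inner_div_le_polarNorm ha hHa hξ x) (inner_div_le_polarNorm ha hHa hξ y)

lemma lipschitzWith_polarNorm (ha : 0 < a) (hHa : ∀ ξ, a * ‖ξ‖ ≤ H ξ) :
    LipschitzWith a⁻¹.toNNReal (polarNorm H) := by
  refine LipschitzWith.of_le_add_mul' _ fun x y => ?_
  have hdist : polarNorm H (x - y) ≤ a⁻¹ * dist x y := by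
    rw [dist_eq_norm]
    exact polarNorm_le_of_forall_inner_div_le (by positivity) fun ξ _ =>
      inner_div_le_inv_mul_norm ha hHa ξ (x - y)
  calc polarNorm H x = polarNorm H (y + (x - y)) := by rw [add_sub_cancel]
    _ ≤ polarNorm H y + polarNorm H (x - y) := polarNorm_add_le ha hHa y (x - y)
    _ ≤ polarNorm H y + a⁻¹ * dist x y := by gcongr

lemma inv_mul_norm_le_polarNorm (ha : 0 < a) (hHa : ∀ ξ, a * ‖ξ‖ ≤ H ξ)
    (hHb : ∀ ξ, H ξ ≤ b * ‖ξ‖) (x : Euc N) : b⁻¹ * ‖x‖ ≤ polarNorm H x := by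
  have hH (ξ : Euc N) : 0 ≤ H ξ := (by positivity : 0 ≤ a * ‖ξ‖).trans (hHa ξ)
  obtain rfl | hx := eq_or_ne x 0
  · simpa using polarNorm_nonneg hH 0
  have hHx : 0 < H x := (by positivity : 0 < a * ‖x‖).trans_le (hHa x)
  calc b⁻¹ * ‖x‖ = ‖x‖ ^ 2 / (b * ‖x‖) := by field_simp
    _ ≤ ‖x‖ ^ 2 / H x := by gcongr; exact hHb x
    _ = ⟪x, x⟫ / H x := by rw [real_inner_self_eq_norm_sq]
    _ ≤ polarNorm H x := inner_div_le_polarNorm ha hHa hx x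

lemma IsFinslerNorm.measurable_polarNorm (hH : IsFinslerNorm H) : Measurable (polarNorm H) := by
  obtain ⟨a, _, ha, -, hab⟩ := hH.bounds
  exact (lipschitzWith_polarNorm ha fun ξ => (hab ξ).1).continuous.measurable

lemma IsFinslerNorm.exists_mul_norm_le_polarNorm (hH : IsFinslerNorm H) :
    ∃ c > 0, ∀ x, c * ‖x‖ ≤ polarNorm H x := by
  obtain ⟨a, b, ha, hle, hab⟩ := hH.bounds
  exact ⟨b⁻¹, inv_pos.2 (ha.trans_le hle),
    inv_mul_norm_le_polarNorm ha (fun ξ => (hab ξ).1) fun ξ => (hab ξ).2⟩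

end Polar

/-- Sharp anisotropic subcritical Hardy inequality, case 1 <= p < N. -/
theorem finsler_hardy_subcritical
    (N : ℕ) (hN : 2 ≤ N) (H : Euc N → ℝ) (hH : IsFinslerNorm H)
    (p : ℝ) (hp1 : 1 ≤ p) (hpN : p < (N : ℝ))
    (Ω : Set (Euc N)) (hΩopen : IsOpen Ω) (hΩconn : IsConnected Ω)
    (u : Euc N → ℝ) (hu : IsTestFun Ω u) :
    (((N : ℝ) - p) / p) ^ p * ∫ x in Ω, |u x| ^ p / polarNorm H x ^ p
      ≤ ∫ x in Ω, |⟪(polarNorm H x)⁻¹ • x, gradient u x⟫| ^ p := by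
  obtain ⟨c, hc, hcH⟩ := hH.exists_mul_norm_le_polarNorm
  simpa [radialDeriv, inner_gradient_right] using
    finsler_hardy_subcritical_general (μ := volume) hH.measurable_polarNorm
      (fun t ht => polarNorm_smul ht.le) hc hcH hp1 (by simpa using hpN) (hu.1.of_le (by simp))
      hu.2.1 hu.2.2
end
end

section
/- Let 1 < p < ∞, let Ω ⊆ ℝ^N be a domain, and let δ ∈ C¹(Ω) be positive on Ω. Assume δ is Δ_{H,p}-superharmonic in the distributional sense, i.e. ∫_Ω H(∇δ(x))^{p−1} (∇_ξ H)(∇δ(x)) · ∇φ(x) dx ≥ 0 for every nonnegative φ ∈ C_c^∞(Ω), where the vector field H(∇δ)^{p−1}(∇_ξ H)(∇δ) is taken to be 0 at points where ∇δ = 0. Then for every u ∈ C_c^∞(Ω), ((p−1)/p)^p · ∫_Ω (|u(x)|^p / δ(x)^p) H(∇δ(x))^p dx ≤ ∫_Ω |∇u(x) · (∇_ξ H)(∇δ(x))|^p dx, where the right-hand integrand is taken to be 0 at points where ∇δ = 0. -/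
/-!
Superharmonicity of `δ` is tested with `φ = |u|^p δ^(1-p)`. Write `h = H(∇δ)`, `w = ∇u · ∇H(∇δ)`,
`t = |u| h / δ` and `k = (p-1)/p`. By Euler's identity `∇H(ξ) · ξ = H(ξ)`, the field
`V = h^(p-1) ∇H(∇δ)` satisfies `V · ∇φ ≤ p t^(p-1) |w| - (p-1) t^p`. Young's inequality for
`(k t)^(p-1) |w|` turns this into `k^(p-1) V · ∇φ ≤ |w|^p - k^p t^p`, and `0 ≤ ∫ V · ∇φ`.

The function `φ` is only `C¹`, but `V` is locally bounded because `H` is Lipschitz, so a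
mollification of `φ` reduces to smooth test functions.
-/

open MeasureTheory Set Filter
open scoped RealInnerProductSpace Topology ENNReal NNReal

noncomputable section

open scoped ContDiff Convolution Gradient

/-! ### Gradients and seminorms -/

section Gradient

variable {E : Type*} [NormedAddCommGroup E] [InnerProductSpace ℝ E] [CompleteSpace E]

lemma norm_gradient_eq_norm_fderiv (f : E → ℝ) (x : E) : ‖∇ f x‖ = ‖fderiv ℝ f x‖ :=
  LinearIsometryEquiv.norm_map _ _

lemma measurable_gradient [MeasurableSpace E] [BorelSpace E] (f : E → ℝ) : Measurable (∇ f) :=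
  (InnerProductSpace.toDual ℝ E).symm.continuous.measurable.comp (measurable_fderiv ℝ f)

lemma continuousOn_gradient_of_isOpen {f : E → ℝ} {s : Set E} (hf : ContDiffOn ℝ 1 f s)
    (hs : IsOpen s) : ContinuousOn (∇ f) s :=
  (InnerProductSpace.toDual ℝ E).symm.continuous.comp_continuousOn
    (hf.continuousOn_fderiv_of_isOpen hs le_rfl)

/-- A norm is not differentiable at `0`, so this is about the junk value of the gradient: it agrees
with the convention that expressions in `∇H(ξ)` are taken to be `0` at `ξ = 0`. -/
lemma gradient_seminorm_zero (H : Seminorm ℝ E) : ∇ H 0 = 0 := by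
  have hodd : fderiv ℝ H 0 = -fderiv ℝ H 0 := by
    simpa [map_neg_eq_map] using fderiv_comp_smul (f := H) (x := (0 : E)) (-1 : ℝ)
  have hzero : fderiv ℝ H 0 = 0 := by
    ext v
    exact self_eq_neg.1 (DFunLike.congr_fun hodd v)
  rw [gradient, hzero, map_zero]

end Gradient

section Seminorm

variable {F : Type*} [NormedAddCommGroup F] [NormedSpace ℝ F]

lemma fderiv_seminorm_apply_self (H : Seminorm ℝ F) {ξ : F} (hH : DifferentiableAt ℝ H ξ) :
    fderiv ℝ H ξ ξ = H ξ := by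
  have hchain : HasDerivAt (fun t : ℝ => H (t • ξ)) (fderiv ℝ H ξ ξ) 1 := by
    have hray : HasDerivAt (fun t : ℝ => t • ξ) ξ 1 := by
      simpa using (hasDerivAt_id (1 : ℝ)).smul_const ξ
    exact HasFDerivAt.comp_hasDerivAt 1 (by simpa using hH.hasFDerivAt) hray
  have hhomog : HasDerivAt (fun t : ℝ => H (t • ξ)) (H ξ) 1 := by
    have hline : HasDerivAt (fun t : ℝ => t * H ξ) (H ξ) 1 := by
      simpa using (hasDerivAt_id (1 : ℝ)).mul_const (H ξ)
    refine hline.congr_of_eventuallyEq ?_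
    filter_upwards [lt_mem_nhds zero_lt_one] with t ht
    rw [map_smul_eq_mul, Real.norm_of_nonneg ht.le]
  exact hchain.unique hhomog

lemma exists_lipschitzWith_seminorm [FiniteDimensional ℝ F] (H : Seminorm ℝ F) :
    ∃ C : ℝ≥0, LipschitzWith C H := by
  obtain ⟨C, hC, hbound⟩ :=
    Seminorm.bound_of_continuous_normedSpace H H.convexOn.locallyLipschitz.continuous
  refine ⟨⟨C, hC.le⟩, LipschitzWith.of_dist_le_mul fun x y => ?_⟩
  rw [Real.dist_eq, dist_eq_norm]
  exact (H.norm_sub_map_le_sub x y).trans (hbound _)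

end Seminorm

lemma exists_norm_gradient_seminorm_le {E : Type*} [NormedAddCommGroup E] [InnerProductSpace ℝ E]
    [FiniteDimensional ℝ E] (H : Seminorm ℝ E) : ∃ C : ℝ, ∀ ξ, ‖∇ H ξ‖ ≤ C := by
  obtain ⟨C, hC⟩ := exists_lipschitzWith_seminorm H
  exact ⟨C, fun ξ => (norm_gradient_eq_norm_fderiv H ξ).trans_le (norm_fderiv_le_of_lipschitz ℝ hC)⟩

/-! ### Mollification -/

section Mollification

variable {E F : Type*} [NormedAddCommGroup E] [NormedSpace ℝ E] [FiniteDimensional ℝ E]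
  [NormedAddCommGroup F] [NormedSpace ℝ F]

lemma tsupport_bump_convolution_subset_cthickening [MeasurableSpace E] [BorelSpace E]
    (ρ : ContDiffBump (0 : E)) (f : E → F) (μ : Measure E) [μ.IsAddHaarMeasure] :
    tsupport (ρ.normed μ ⋆[ContinuousLinearMap.lsmul ℝ ℝ, μ] f) ⊆
      Metric.cthickening ρ.rOut (tsupport f) := by
  refine closure_minimal ((support_convolution_subset _).trans ?_) Metric.isClosed_cthickening
  rintro _ ⟨y, hy, z, hz, rfl⟩
  refine Metric.mem_cthickening_of_dist_le _ z _ _ (subset_tsupport _ hz) ?_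
  rw [ρ.support_normed_eq, mem_ball_zero_iff] at hy
  simpa only [dist_eq_norm, add_sub_cancel_right] using hy.le

lemma fderiv_bump_convolution [MeasurableSpace E] [BorelSpace E] (ρ : ContDiffBump (0 : E))
    {f : E → F} (hf : ContDiff ℝ 1 f) (hfc : HasCompactSupport f)
    (μ : Measure E) [μ.IsAddHaarMeasure] (x : E) :
    fderiv ℝ (ρ.normed μ ⋆[ContinuousLinearMap.lsmul ℝ ℝ, μ] f) x =
      (ρ.normed μ ⋆[ContinuousLinearMap.lsmul ℝ ℝ, μ] fderiv ℝ f) x :=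
  (hfc.hasFDerivAt_convolution_right (ContinuousLinearMap.lsmul ℝ ℝ)
    ρ.continuous_normed.locallyIntegrable hf x).fderiv

lemma exists_contDiff_nonneg_dist_fderiv_le {φ : E → ℝ} (hφ : ContDiff ℝ 1 φ)
    (hφc : HasCompactSupport φ) (hφ0 : ∀ x, 0 ≤ φ x) {r ε : ℝ} (hr : 0 < r) (hε : 0 < ε) :
    ∃ ψ : E → ℝ, ContDiff ℝ ∞ ψ ∧ tsupport ψ ⊆ Metric.cthickening r (tsupport φ) ∧
      (∀ x, 0 ≤ ψ x) ∧ ∀ x, dist (fderiv ℝ ψ x) (fderiv ℝ φ x) ≤ ε := by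
  borelize E
  have hcont : Continuous (fderiv ℝ φ) := hφ.continuous_fderiv one_ne_zero
  obtain ⟨η, hη, hηε⟩ := Metric.uniformContinuous_iff.1
    ((hφc.fderiv ℝ).uniformContinuous_of_continuous hcont) ε hε
  have hrη : 0 < min r η := lt_min hr hη
  let ρ : ContDiffBump (0 : E) := ⟨min r η / 2, min r η, half_pos hrη, half_lt_self hrη⟩
  let μ : Measure E := Measure.addHaar
  refine ⟨ρ.normed μ ⋆[ContinuousLinearMap.lsmul ℝ ℝ, μ] φ, ?_, ?_, fun x => ?_, fun x => ?_⟩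
  · exact ρ.hasCompactSupport_normed.contDiff_convolution_left _ ρ.contDiff_normed
      hφ.continuous.locallyIntegrable
  · exact (tsupport_bump_convolution_subset_cthickening ρ φ μ).trans
      (Metric.cthickening_mono (min_le_left _ _) _)
  · exact integral_nonneg fun t => mul_nonneg (ρ.nonneg_normed t) (hφ0 _)
  · rw [fderiv_bump_convolution ρ hφ hφc μ]
    exact ρ.dist_normed_convolution_le hcont.aestronglyMeasurable fun y hy =>
      (hηε (hy.trans_le (min_le_right _ _))).le

end Mollification

/-! ### Fields with nonpositive distributional divergence -/

section Divergence

lemma integrableOn_of_locallyIntegrableOn_of_eq_zero {X F : Type*} [TopologicalSpace X]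
    [MeasurableSpace X] [NormedAddCommGroup F] {μ : Measure X}
    {Ω K : Set X} (hΩ : MeasurableSet Ω) {f : X → F} (hf : LocallyIntegrableOn f Ω μ)
    (hK : IsCompact K) (hKΩ : K ⊆ Ω) (hfK : ∀ x ∉ K, f x = 0) : IntegrableOn f Ω μ :=
  (hf.integrableOn_compact_subset hKΩ hK).of_forall_sdiff_eq_zero hΩ fun x hx => hfK x hx.2

variable {E : Type*} [NormedAddCommGroup E] [NormedSpace ℝ E]

lemma fderiv_eq_zero_of_notMem_tsupport {f : E → ℝ} {x : E} (hx : x ∉ tsupport f) :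
    fderiv ℝ f x = 0 :=
  image_eq_zero_of_notMem_tsupport fun h => hx (tsupport_fderiv_subset ℝ h)

variable [MeasurableSpace E]

/-- The field `V` satisfies `div V ≤ 0` on `Ω` in the sense of distributions, with respect to the
measure `μ`. For `V = H(∇δ)^(p-1) ∇H(∇δ)` this says that `δ` is `Δ_{H,p}`-superharmonic. The pairing
`V · ∇φ` is written `dφ(V)`, so that no inner product is needed. -/
def HasNonposDivOn (V : E → E) (Ω : Set E) (μ : Measure E) : Prop :=
  ∀ φ : E → ℝ, ContDiff ℝ ∞ φ → HasCompactSupport φ → tsupport φ ⊆ Ω → (∀ x, 0 ≤ φ x) →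
    0 ≤ ∫ x in Ω, fderiv ℝ φ x (V x) ∂μ

variable [BorelSpace E] [SecondCountableTopology E] {Ω : Set E} {V : E → E} {μ : Measure E}

lemma integrableOn_fderiv_apply (hΩ : MeasurableSet Ω) (hV : LocallyIntegrableOn V Ω μ)
    {φ : E → ℝ} (hφ : ContDiff ℝ 1 φ) (hφc : HasCompactSupport φ) (hφΩ : tsupport φ ⊆ Ω) :
    IntegrableOn (fun x => fderiv ℝ φ x (V x)) Ω μ := by
  have hcont : Continuous (fderiv ℝ φ) := hφ.continuous_fderiv one_ne_zero
  have hVφ : IntegrableOn V (tsupport φ) μ := hV.integrableOn_compact_subset hφΩ hφc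
  obtain ⟨C, hC⟩ := (hφc.fderiv ℝ).exists_bound_of_continuous hcont
  have hint : IntegrableOn (fun x => fderiv ℝ φ x (V x)) (tsupport φ) μ :=
    (hVφ.norm.const_mul C).mono'
      (isBoundedBilinearMap_apply.continuous.comp_aestronglyMeasurable₂
        hcont.aestronglyMeasurable hVφ.aestronglyMeasurable)
      (.of_forall fun x => (fderiv ℝ φ x).le_of_opNorm_le (hC x) _)
  refine hint.of_forall_sdiff_eq_zero hΩ fun x hx => ?_
  rw [fderiv_eq_zero_of_notMem_tsupport hx.2, zero_apply]

lemma dist_setIntegral_fderiv_apply_le (hΩ : MeasurableSet Ω) (hV : LocallyIntegrableOn V Ω μ)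
    {K : Set E} (hK : IsCompact K) (hKΩ : K ⊆ Ω) {φ ψ : E → ℝ} (hφ : ContDiff ℝ 1 φ)
    (hψ : ContDiff ℝ 1 ψ) (hφK : tsupport φ ⊆ K) (hψK : tsupport ψ ⊆ K) {ε : ℝ}
    (hε : ∀ x, dist (fderiv ℝ φ x) (fderiv ℝ ψ x) ≤ ε) :
    dist (∫ x in Ω, fderiv ℝ φ x (V x) ∂μ) (∫ x in Ω, fderiv ℝ ψ x (V x) ∂μ) ≤
      ε * ∫ x in K, ‖V x‖ ∂μ := by
  have hint : ∀ {χ : E → ℝ}, ContDiff ℝ 1 χ → tsupport χ ⊆ K →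
      IntegrableOn (fun x => fderiv ℝ χ x (V x)) Ω μ := fun hχ hχK =>
    integrableOn_fderiv_apply hΩ hV hχ (hK.of_isClosed_subset (isClosed_tsupport _) hχK)
      (hχK.trans hKΩ)
  have hrestrict : ∫ x in Ω, (fderiv ℝ φ x - fderiv ℝ ψ x) (V x) ∂μ =
      ∫ x in K, (fderiv ℝ φ x - fderiv ℝ ψ x) (V x) ∂μ := by
    refine setIntegral_eq_of_subset_of_forall_sdiff_eq_zero hΩ hKΩ fun x hx => ?_
    rw [fderiv_eq_zero_of_notMem_tsupport fun h => hx.2 (hφK h),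
      fderiv_eq_zero_of_notMem_tsupport fun h => hx.2 (hψK h), sub_zero,
      zero_apply]
  calc dist (∫ x in Ω, fderiv ℝ φ x (V x) ∂μ) (∫ x in Ω, fderiv ℝ ψ x (V x) ∂μ)
      = ‖∫ x in K, (fderiv ℝ φ x - fderiv ℝ ψ x) (V x) ∂μ‖ := by
        rw [dist_eq_norm, ← integral_sub (hint hφ hφK) (hint hψ hψK), ← hrestrict]
        rfl
    _ ≤ ∫ x in K, ε * ‖V x‖ ∂μ := by
        refine norm_integral_le_of_norm_le
          ((hV.integrableOn_compact_subset hKΩ hK).norm.const_mul ε) (.of_forall fun x => ?_)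
        exact ContinuousLinearMap.le_of_opNorm_le _ ((dist_eq_norm _ _).symm.trans_le (hε x)) _
    _ = ε * ∫ x in K, ‖V x‖ ∂μ := integral_const_mul _ _

lemma HasNonposDivOn.setIntegral_fderiv_apply_nonneg [FiniteDimensional ℝ E]
    (hdiv : HasNonposDivOn V Ω μ) (hΩ : IsOpen Ω) (hV : LocallyIntegrableOn V Ω μ)
    {φ : E → ℝ} (hφ : ContDiff ℝ 1 φ) (hφc : HasCompactSupport φ) (hφΩ : tsupport φ ⊆ Ω)
    (hφ0 : ∀ x, 0 ≤ φ x) : 0 ≤ ∫ x in Ω, fderiv ℝ φ x (V x) ∂μ := by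
  obtain ⟨r, hr, hrΩ⟩ := hφc.isCompact.exists_cthickening_subset_open hΩ hφΩ
  have hK : IsCompact (Metric.cthickening r (tsupport φ)) := hφc.isCompact.cthickening
  refine le_of_forall_pos_lt_add fun η hη => ?_
  obtain ⟨ε, hε, hεη⟩ := exists_pos_mul_lt hη (∫ x in Metric.cthickening r (tsupport φ), ‖V x‖ ∂μ)
  obtain ⟨ψ, hψ, hψK, hψ0, hψφ⟩ := exists_contDiff_nonneg_dist_fderiv_le hφ hφc hφ0 hr hε
  have hψ_nonneg : 0 ≤ ∫ x in Ω, fderiv ℝ ψ x (V x) ∂μ :=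
    hdiv ψ hψ (hK.of_isClosed_subset (isClosed_tsupport _) hψK) (hψK.trans hrΩ) hψ0
  have hclose := dist_setIntegral_fderiv_apply_le hΩ.measurableSet hV hK hrΩ
    (hψ.of_le (by exact_mod_cast le_top)) hφ hψK (Metric.self_subset_cthickening _) hψφ
  linarith [(abs_le.1 hclose).2]

end Divergence

/-! ### The test function -/

section TestFunction

variable {E : Type*} {p : ℝ} {u δ : E → ℝ} {Ω : Set E}

/-- The test function `|u|^p δ^(1-p)` of Picone type. -/
def hardyTestFun (p : ℝ) (u δ : E → ℝ) (x : E) : ℝ :=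
  |u x| ^ p * δ x ^ (1 - p)

lemma hardyTestFun_nonneg [TopologicalSpace E] (hp : p ≠ 0) (hu : tsupport u ⊆ Ω)
    (hδpos : ∀ x ∈ Ω, 0 < δ x) (x : E) : 0 ≤ hardyTestFun p u δ x := by
  by_cases hx : x ∈ tsupport u
  · have := hδpos x (hu hx)
    unfold hardyTestFun
    positivity
  · simp [hardyTestFun, image_eq_zero_of_notMem_tsupport hx, Real.zero_rpow hp]

lemma tsupport_hardyTestFun_subset [TopologicalSpace E] (hp : p ≠ 0) (u δ : E → ℝ) :
    tsupport (hardyTestFun p u δ) ⊆ tsupport u := by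
  refine closure_mono fun x hx hux => hx ?_
  simp [hardyTestFun, hux, Real.zero_rpow hp]

variable [NormedAddCommGroup E] [NormedSpace ℝ E]

lemma contDiff_hardyTestFun (hp : 1 < p) (hΩ : IsOpen Ω) (hu : ContDiff ℝ 1 u)
    (huΩ : tsupport u ⊆ Ω) (hδ : ContDiffOn ℝ 1 δ Ω) (hδpos : ∀ x ∈ Ω, 0 < δ x) :
    ContDiff ℝ 1 (hardyTestFun p u δ) := by
  refine contDiff_iff_contDiffAt.2 fun x => ?_
  by_cases hx : x ∈ tsupport u
  · exact (hu.norm_rpow hp).contDiffAt.mul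
      ((hδ.contDiffAt (hΩ.mem_nhds (huΩ hx))).rpow_const_of_ne (hδpos x (huΩ hx)).ne')
  · have hzero : hardyTestFun p u δ =ᶠ[𝓝 x] 0 := notMem_tsupport_iff_eventuallyEq.1 fun h =>
      hx (tsupport_hardyTestFun_subset (by positivity) u δ h)
    exact contDiffAt_const.congr_of_eventuallyEq hzero

lemma fderiv_hardyTestFun_apply (hp : 1 < p) {x : E} (hu : DifferentiableAt ℝ u x)
    (hδ : DifferentiableAt ℝ δ x) (hδpos : 0 < δ x) (v : E) :
    fderiv ℝ (hardyTestFun p u δ) x v =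
      p * |u x| ^ (p - 2) * u x * δ x ^ (1 - p) * fderiv ℝ u x v
        - (p - 1) * |u x| ^ p * δ x ^ (-p) * fderiv ℝ δ x v := by
  have hu_pow := (hasDerivAt_abs_rpow (u x) hp).comp_hasFDerivAt x hu.hasFDerivAt
  have hδ_pow := (Real.hasDerivAt_rpow_const (p := 1 - p) (Or.inl hδpos.ne')).comp_hasFDerivAt x
    hδ.hasFDerivAt
  have hprod : HasFDerivAt (hardyTestFun p u δ) _ x := hu_pow.mul hδ_pow
  rw [hprod.fderiv, show 1 - p - 1 = -p by ring]
  simp only [Function.comp_apply, add_apply, smul_apply, smul_eq_mul]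
  ring

end TestFunction

/-! ### The pointwise inequality -/

section Pointwise

variable {p : ℝ}

lemma mul_rpow_sub_one_mul_le {a b : ℝ} (hp : 1 < p) (ha : 0 ≤ a) (hb : 0 ≤ b) :
    p * (a ^ (p - 1) * b) ≤ (p - 1) * a ^ p + b ^ p := by
  have hp1 : 0 < p - 1 := by linarith
  have hyoung := Real.young_inequality_of_nonneg (Real.rpow_nonneg ha (p - 1)) hb
    (Real.HolderConjugate.conjExponent hp).symm
  rw [Real.conjExponent, ← Real.rpow_mul ha, mul_div_cancel₀ _ hp1.ne'] at hyoung
  have : 0 < p := by linarith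
  calc p * (a ^ (p - 1) * b) ≤ p * (a ^ p / (p / (p - 1)) + b ^ p / p) := by gcongr
    _ = (p - 1) * a ^ p + b ^ p := by field_simp

/-- Young's inequality for `(k t)^(p-1) b`; the choice `k = (p-1)/p` maximises the constant
`(p-1) (k^(p-1) - k^p)` in front of `t^p`. -/
lemma hardy_const_mul_le {t b : ℝ} (hp : 1 < p) (ht : 0 ≤ t) (hb : 0 ≤ b) :
    ((p - 1) / p) ^ (p - 1) * (p * (t ^ (p - 1) * b) - (p - 1) * t ^ p) ≤
      b ^ p - ((p - 1) / p) ^ p * t ^ p := by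
  set k := (p - 1) / p with hk
  have hk0 : 0 ≤ k := div_nonneg (by linarith) (by linarith)
  have hyoung := mul_rpow_sub_one_mul_le hp (mul_nonneg hk0 ht) hb
  rw [Real.mul_rpow hk0 ht, Real.mul_rpow hk0 ht] at hyoung
  have hkp : k ^ (p - 1) * (p - 1) = p * k ^ p := by
    have hpk : p - 1 = p * k := by rw [hk]; field_simp
    have hsucc : k ^ p = k ^ (p - 1) * k := by
      rw [← Real.rpow_add_one' hk0 (by linarith), sub_add_cancel]
    rw [hsucc]
    linear_combination k ^ (p - 1) * hpk
  linear_combination hyoung - t ^ p * hkp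

lemma abs_rpow_sub_two_mul_self_mul_le (hp : 1 < p) (s w : ℝ) :
    |s| ^ (p - 2) * s * w ≤ |s| ^ (p - 1) * |w| := by
  have hsucc : |s| ^ (p - 1) = |s| ^ (p - 2) * |s| := by
    rw [← Real.rpow_add_one' (abs_nonneg s) (by linarith)]
    ring_nf
  rw [hsucc, mul_assoc, mul_assoc, ← abs_mul]
  gcongr
  exact le_abs_self _

lemma picone_le {s d h w : ℝ} (hp : 1 < p) (hd : 0 < d) (hh : 0 ≤ h) :
    h ^ (p - 1) * (p * |s| ^ (p - 2) * s * d ^ (1 - p) * w - (p - 1) * |s| ^ p * d ^ (-p) * h) ≤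
      p * ((|s| / d * h) ^ (p - 1) * |w|) - (p - 1) * (|s| / d * h) ^ p := by
  have hsplit : ∀ q : ℝ, (|s| / d * h) ^ q = |s| ^ q * d ^ (-q) * h ^ q := fun q => by
    rw [Real.mul_rpow (by positivity) hh, Real.div_rpow (abs_nonneg _) hd.le, Real.rpow_neg hd.le,
      div_eq_mul_inv]
  have hhp : h ^ p = h ^ (p - 1) * h := by
    rw [← Real.rpow_add_one' hh (by linarith), sub_add_cancel]
  have hcoef : 0 ≤ p * d ^ (1 - p) * h ^ (p - 1) := by positivity
  rw [hsplit, hsplit, hhp, neg_sub]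
  linear_combination mul_le_mul_of_nonneg_left (abs_rpow_sub_two_mul_self_mul_le hp s w) hcoef

variable {E : Type*} [NormedAddCommGroup E] [InnerProductSpace ℝ E] [CompleteSpace E]

/-- The field `H(ξ)^(p-1) ∇H(ξ)`, whose divergence at `ξ = ∇δ` is `Δ_{H,p} δ`. For a seminorm `H` it
vanishes at `ξ = 0` without a case distinction, by `gradient_seminorm_zero`. -/
def finslerFlux (H : E → ℝ) (p : ℝ) (ξ : E) : E :=
  H ξ ^ (p - 1) • ∇ H ξ

lemma hardy_pointwise {H : Seminorm ℝ E} (hH : ∀ ξ ≠ 0, DifferentiableAt ℝ H ξ) (hp : 1 < p)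
    {u δ : E → ℝ} {x : E} (hu : DifferentiableAt ℝ u x) (hδ : DifferentiableAt ℝ δ x)
    (hδpos : 0 < δ x) :
    ((p - 1) / p) ^ (p - 1) * fderiv ℝ (hardyTestFun p u δ) x (finslerFlux H p (∇ δ x)) ≤
      |⟪∇ u x, ∇ H (∇ δ x)⟫| ^ p - ((p - 1) / p) ^ p * (|u x| ^ p / δ x ^ p * H (∇ δ x) ^ p) := by
  have hHδ : 0 ≤ H (∇ δ x) := apply_nonneg H _
  have heuler : fderiv ℝ δ x (∇ H (∇ δ x)) = H (∇ δ x) := by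
    rw [← inner_gradient_left, inner_gradient_right, conj_trivial]
    rcases eq_or_ne (∇ δ x) 0 with h0 | h0
    · simp [h0]
    · exact fderiv_seminorm_apply_self H (hH _ h0)
  have hratio : |u x| ^ p / δ x ^ p * H (∇ δ x) ^ p = (|u x| / δ x * H (∇ δ x)) ^ p := by
    rw [Real.mul_rpow (by positivity) hHδ, Real.div_rpow (abs_nonneg _) hδpos.le]
  rw [hratio, inner_gradient_left]
  refine le_trans ?_ (hardy_const_mul_le hp (by positivity) (abs_nonneg _))
  rw [finslerFlux, map_smul, smul_eq_mul, fderiv_hardyTestFun_apply hp hu hδ hδpos, heuler]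
  exact mul_le_mul_of_nonneg_left (picone_le hp hδpos hHδ)
    (Real.rpow_nonneg (div_nonneg (by linarith) (by linarith)) _)

end Pointwise

/-! ### The Hardy inequality -/

section Hardy

variable {E : Type*} [NormedAddCommGroup E] [InnerProductSpace ℝ E] [FiniteDimensional ℝ E]
  [MeasurableSpace E] [BorelSpace E] {μ : Measure E} [IsLocallyFiniteMeasure μ]
  {H : Seminorm ℝ E} {p : ℝ} {Ω : Set E} {u δ : E → ℝ}

lemma locallyIntegrableOn_finslerFlux (H : Seminorm ℝ E) (hp : 1 ≤ p) (hΩ : IsOpen Ω) {G : E → E}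
    (hG : Measurable G) (hGΩ : ContinuousOn G Ω) :
    LocallyIntegrableOn (fun x => finslerFlux H p (G x)) Ω μ := by
  obtain ⟨C, hC⟩ := exists_norm_gradient_seminorm_le H
  have hgrad : LocallyIntegrable (fun x => ∇ H (G x)) μ :=
    (locallyIntegrable_const C).mono ((measurable_gradient H).comp hG).aestronglyMeasurable
      (.of_forall fun x => (hC _).trans (le_abs_self C))
  have hpow : ContinuousOn (fun x => H (G x) ^ (p - 1)) Ω :=
    (H.convexOn.locallyLipschitz.continuous.comp_continuousOn hGΩ).rpow_const
      fun x _ => Or.inr (by linarith)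
  exact (hgrad.locallyIntegrableOn Ω).continuousOn_smul hΩ.isLocallyClosed hpow

lemma integrableOn_hardy_left (H : Seminorm ℝ E) (hp : 0 < p) (hΩ : IsOpen Ω) (hu : Continuous u)
    (huc : HasCompactSupport u) (huΩ : tsupport u ⊆ Ω) (hδ : ContinuousOn δ Ω)
    (hδpos : ∀ x ∈ Ω, 0 < δ x) {G : E → E} (hG : ContinuousOn G Ω) :
    IntegrableOn (fun x => |u x| ^ p / δ x ^ p * H (G x) ^ p) Ω μ := by
  have hcont : ContinuousOn (fun x => |u x| ^ p / δ x ^ p * H (G x) ^ p) Ω := by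
    refine ContinuousOn.mul (ContinuousOn.div ?_ ?_ ?_) ?_
    · exact (hu.abs.rpow_const fun _ => Or.inr hp.le).continuousOn
    · exact hδ.rpow_const fun x hx => Or.inl (hδpos x hx).ne'
    · exact fun x hx => (Real.rpow_pos_of_pos (hδpos x hx) _).ne'
    · exact (H.convexOn.locallyLipschitz.continuous.comp_continuousOn hG).rpow_const
        fun _ _ => Or.inr hp.le
  refine integrableOn_of_locallyIntegrableOn_of_eq_zero hΩ.measurableSet
    (hcont.locallyIntegrableOn hΩ.measurableSet) huc huΩ fun x hx => ?_
  simp [image_eq_zero_of_notMem_tsupport hx, Real.zero_rpow hp.ne']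

lemma integrableOn_hardy_right (H : Seminorm ℝ E) (hp : 0 < p) (hΩ : MeasurableSet Ω)
    (hu : ContDiff ℝ 1 u) (huc : HasCompactSupport u) (huΩ : tsupport u ⊆ Ω) {G : E → E}
    (hG : Measurable G) :
    IntegrableOn (fun x => |⟪∇ u x, ∇ H (G x)⟫| ^ p) Ω μ := by
  obtain ⟨C, hC⟩ := exists_norm_gradient_seminorm_le H
  have hbound : LocallyIntegrable (fun x => (‖fderiv ℝ u x‖ * C) ^ p) μ :=
    (((hu.continuous_fderiv one_ne_zero).norm.mul_const C).rpow_const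
      fun _ => Or.inr hp.le).locallyIntegrable
  have hmeas : Measurable fun x => |⟪∇ u x, ∇ H (G x)⟫| ^ p :=
    (continuous_abs.measurable.comp
      ((measurable_gradient u).inner ((measurable_gradient H).comp hG))).pow_const p
  have hlocal : LocallyIntegrable (fun x => |⟪∇ u x, ∇ H (G x)⟫| ^ p) μ := by
    refine hbound.mono hmeas.aestronglyMeasurable (.of_forall fun x => ?_)
    rw [Real.norm_of_nonneg (by positivity)]
    refine le_trans ?_ (le_abs_self _)
    gcongr
    rw [← norm_gradient_eq_norm_fderiv]
    exact (abs_real_inner_le_norm _ _).trans (by gcongr; exact hC _)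
  refine integrableOn_of_locallyIntegrableOn_of_eq_zero hΩ (hlocal.locallyIntegrableOn Ω) huc huΩ
    fun x hx => ?_
  rw [inner_gradient_left, fderiv_eq_zero_of_notMem_tsupport hx]
  simp [Real.zero_rpow hp.ne']

theorem finsler_hardy_geometric_general (hH : ∀ ξ ≠ 0, DifferentiableAt ℝ H ξ) (hp : 1 < p)
    (hΩ : IsOpen Ω) (hδ : ContDiffOn ℝ 1 δ Ω) (hδpos : ∀ x ∈ Ω, 0 < δ x)
    (hsuper : HasNonposDivOn (fun x => finslerFlux H p (∇ δ x)) Ω μ)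
    (hu : ContDiff ℝ 1 u) (huc : HasCompactSupport u) (huΩ : tsupport u ⊆ Ω) :
    ((p - 1) / p) ^ p * ∫ x in Ω, |u x| ^ p / δ x ^ p * H (∇ δ x) ^ p ∂μ ≤
      ∫ x in Ω, |⟪∇ u x, ∇ H (∇ δ x)⟫| ^ p ∂μ := by
  have hp0 : 0 < p := by linarith
  have hk : 0 ≤ ((p - 1) / p) ^ (p - 1) := Real.rpow_nonneg (div_nonneg (by linarith) hp0.le) _
  have hδ' : ContinuousOn (∇ δ) Ω := continuousOn_gradient_of_isOpen hδ hΩ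
  have hV : LocallyIntegrableOn (fun x => finslerFlux H p (∇ δ x)) Ω μ :=
    locallyIntegrableOn_finslerFlux H hp.le hΩ (measurable_gradient δ) hδ'
  have hφ : ContDiff ℝ 1 (hardyTestFun p u δ) := contDiff_hardyTestFun hp hΩ hu huΩ hδ hδpos
  have hφu : tsupport (hardyTestFun p u δ) ⊆ tsupport u := tsupport_hardyTestFun_subset hp0.ne' u δ
  have hφc : HasCompactSupport (hardyTestFun p u δ) :=
    huc.of_isClosed_subset (isClosed_tsupport _) hφu
  have hleft := (integrableOn_hardy_left (μ := μ) H hp0 hΩ hu.continuous huc huΩ hδ.continuousOn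
    hδpos hδ').const_mul (((p - 1) / p) ^ p)
  have hright := integrableOn_hardy_right (μ := μ) H hp0 hΩ.measurableSet hu huc huΩ
    (measurable_gradient δ)
  rw [← sub_nonneg, ← integral_const_mul, ← integral_sub hright hleft]
  calc 0 ≤ ((p - 1) / p) ^ (p - 1) *
        ∫ x in Ω, fderiv ℝ (hardyTestFun p u δ) x (finslerFlux H p (∇ δ x)) ∂μ :=
        mul_nonneg hk (hsuper.setIntegral_fderiv_apply_nonneg hΩ hV hφ hφc (hφu.trans huΩ)
          (hardyTestFun_nonneg hp0.ne' huΩ hδpos))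
    _ ≤ _ := by
        rw [← integral_const_mul]
        refine setIntegral_mono_on
          ((integrableOn_fderiv_apply hΩ.measurableSet hV hφ hφc (hφu.trans huΩ)).const_mul _)
          (hright.sub hleft) hΩ.measurableSet fun x hx => ?_
        exact hardy_pointwise hH hp (hu.differentiable one_ne_zero x)
          ((hδ.contDiffAt (hΩ.mem_nhds hx)).differentiableAt one_ne_zero) (hδpos x hx)

end Hardy

/-- A Finsler norm as a seminorm: convexity and homogeneity make it subadditive. -/
def IsFinslerNorm.toSeminorm {N : ℕ} {H : Euc N → ℝ} (hH : IsFinslerNorm H) :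
    Seminorm ℝ (Euc N) :=
  Seminorm.of H
    (fun x y => by
      have hmid := hH.convexOn.2 (mem_univ ((2 : ℝ) • x)) (mem_univ ((2 : ℝ) • y))
        (by norm_num : (0 : ℝ) ≤ 1 / 2) (by norm_num : (0 : ℝ) ≤ 1 / 2) (by norm_num)
      rw [smul_smul, smul_smul, hH.homog, hH.homog] at hmid
      norm_num at hmid
      linarith)
    hH.homog

open scoped Classical in
/-- Anisotropic L^p-Hardy inequality of geometric type, for a positive
C¹ function δ which is Δ_{H,p}-superharmonic in the distributional sense. -/
theorem finsler_hardy_geometric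
    (N : ℕ) (hN : 2 ≤ N) (H : Euc N → ℝ) (hH : IsFinslerNorm H)
    (p : ℝ) (hp : 1 < p)
    (Ω : Set (Euc N)) (hΩopen : IsOpen Ω) (hΩconn : IsConnected Ω)
    (δ : Euc N → ℝ) (hδ : ContDiffOn ℝ 1 δ Ω) (hδpos : ∀ x ∈ Ω, 0 < δ x)
    (hsuper : ∀ φ : Euc N → ℝ, IsTestFun Ω φ → (∀ x, 0 ≤ φ x) →
      0 ≤ ∫ x in Ω, ⟪(if gradient δ x = 0 then 0 else
            H (gradient δ x) ^ (p - 1) • gradient H (gradient δ x)), gradient φ x⟫)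
    (u : Euc N → ℝ) (hu : IsTestFun Ω u) :
    ((p - 1) / p) ^ p * ∫ x in Ω, |u x| ^ p / δ x ^ p * H (gradient δ x) ^ p
      ≤ ∫ x in Ω, (if gradient δ x = 0 then 0 else
          |⟪gradient u x, gradient H (gradient δ x)⟫| ^ p) := by
  have hgrad0 : gradient H 0 = 0 := gradient_seminorm_zero hH.toSeminorm
  have hflux : ∀ ξ, (if ξ = 0 then 0 else H ξ ^ (p - 1) • gradient H ξ) = finslerFlux H p ξ :=
    fun ξ => ite_eq_right_iff.2 fun hξ => by rw [hξ, hgrad0, smul_zero]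
  have hright : ∀ x, (if gradient δ x = 0 then 0 else
      |⟪gradient u x, gradient H (gradient δ x)⟫| ^ p) =
        |⟪gradient u x, gradient H (gradient δ x)⟫| ^ p := fun x =>
    ite_eq_right_iff.2 fun hx => by
      rw [hx, hgrad0, inner_zero_right, abs_zero, Real.zero_rpow (by linarith)]
  simp only [hright]
  simp only [hflux, inner_gradient_right, conj_trivial] at hsuper
  exact finsler_hardy_geometric_general (H := hH.toSeminorm) (fun ξ hξ =>
      (hH.smooth.contDiffAt (isOpen_compl_singleton.mem_nhds hξ)).differentiableAt two_ne_zero)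
    hp hΩopen hδ hδpos (fun φ hφ hφc hφΩ => hsuper φ ⟨hφ, hφc, hφΩ⟩)
    (hu.1.of_le (by exact_mod_cast le_top)) hu.2.1 hu.2.2
end
end

section
/- Let N ≥ 2, 1 < p < ∞, and let ℝ^N_+ = { x = (x', x_N) ∈ ℝ^N : x_N > 0 } be the half-space, with anisotropic distance to the boundary d_H(x) = inf { H⁰(x − y) : y ∈ ℝ^N, y_N = 0 } (so that d_H is a positive linear function of x_N on ℝ^N_+, everywhere differentiable, with H(∇d_H) = 1). Then for every u ∈ C_c^∞(ℝ^N_+), ((p−1)/p)^p · ∫_{ℝ^N_+} |u(x)|^p / d_H(x)^p dx ≤ ∫_{ℝ^N_+} |∇u(x) · (∇_ξ H)(∇d_H(x))|^p dx. -/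
/-!
Let `ν` be the inner normal of the half-space and `w = ∇H(ν)`. By convexity `H` lies above its
tangent plane at `ν`, so `⟪w, ξ⟫ ≤ H ξ` for all `ξ`, with equality at `ν`. Hence `H⁰(w) ≤ 1`, and
the distance from `x` to the hyperplane is `d x = ⟪ν, x⟫ / H ν`, attained by moving from `x`
along `-w`. In particular `∇H(∇d) = w` and `∂_w d = 1`.

Write `u = d • v`, so that `∂_w u = v + d • ∂_w v`. With `κ = (p - 1) / p`, the tangent line
inequality for `‖·‖ ^ p` at `κ • v` becomes
`κ ^ p * ‖v‖ ^ p + κ ^ (p - 1) * ∂_w (d * ‖v‖ ^ p) ≤ ‖∂_w u‖ ^ p`.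
The derivative term integrates to zero, and `‖v‖ = ‖u‖ / d` on the half-space.
-/

open MeasureTheory Set Filter
open scoped RealInnerProductSpace Topology ENNReal NNReal

noncomputable section

section ConvexAnalysis

variable {E F : Type*} [NormedAddCommGroup E] [NormedSpace ℝ E] [NormedAddCommGroup F]
  [InnerProductSpace ℝ F]

lemma add_fderiv_sub_le_of_convexOn {f : E → ℝ} (hf : ConvexOn ℝ univ f) {x : E}
    (hd : DifferentiableAt ℝ f x) (y : E) : f x + fderiv ℝ f x (y - x) ≤ f y := by
  have hline : ConvexOn ℝ univ (f ∘ AffineMap.lineMap (k := ℝ) x y) := hf.comp_affineMap _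
  have hderiv : HasDerivAt (f ∘ AffineMap.lineMap (k := ℝ) x y) (fderiv ℝ f x (y - x)) 0 :=
    (by simpa using hd.hasFDerivAt :
      HasFDerivAt f (fderiv ℝ f x) (AffineMap.lineMap (k := ℝ) x y (0 : ℝ))).comp_hasDerivAt 0
      AffineMap.hasDerivAt_lineMap
  have hslope := hline.le_slope_of_hasDerivAt (mem_univ 0) (mem_univ 1) one_pos hderiv
  simp only [slope_def_field, Function.comp_apply, AffineMap.lineMap_apply_one,
    AffineMap.lineMap_apply_zero, sub_zero, div_one] at hslope
  linarith

lemma convexOn_norm_rpow {p : ℝ} (hp : 1 ≤ p) : ConvexOn ℝ univ fun x : E => ‖x‖ ^ p := by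
  have himage : (norm : E → ℝ) '' univ ⊆ Ici 0 := by
    rintro _ ⟨x, -, rfl⟩
    exact norm_nonneg x
  have hmono : MonotoneOn (fun t : ℝ => t ^ p) (Ici 0) :=
    Real.monotoneOn_rpow_Ici_of_exponent_nonneg (zero_le_one.trans hp)
  have hconvex : Convex ℝ ((norm : E → ℝ) '' univ) :=
    ((isPreconnected_univ.image _ continuous_norm.continuousOn).ordConnected).convex
  exact ((convexOn_rpow hp).subset himage hconvex).comp convexOn_univ_norm (hmono.mono himage)

lemma norm_rpow_add_inner_sub_le {p : ℝ} (hp : 1 < p) (a b : F) :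
    ‖a‖ ^ p + p * ‖a‖ ^ (p - 2) * ⟪a, b - a⟫ ≤ ‖b‖ ^ p := by
  have h := add_fderiv_sub_le_of_convexOn (convexOn_norm_rpow hp.le)
    (hasFDerivAt_norm_rpow a hp).differentiableAt b
  simpa [fderiv_norm_rpow a hp] using h

end ConvexAnalysis

section Hardy

variable {E F : Type*} [NormedAddCommGroup E] [NormedSpace ℝ E]
  [NormedAddCommGroup F] [InnerProductSpace ℝ F]

lemma hardy_pointwise_s5 {p : ℝ} (hp : 1 < p) (v c : F) :
    ((p - 1) / p) ^ p * ‖v‖ ^ p +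
        ((p - 1) / p) ^ (p - 1) * (‖v‖ ^ p + p * ‖v‖ ^ (p - 2) * ⟪v, c⟫) ≤ ‖v + c‖ ^ p := by
  have hp₀ : 0 < p := one_pos.trans hp
  have hκ : 0 < (p - 1) / p := div_pos (sub_pos.2 hp) hp₀
  have hpκ : p * (1 - (p - 1) / p) = 1 := by field_simp; ring
  set κ := (p - 1) / p
  have hnorm : ‖v‖ ^ (p - 2) * ‖v‖ ^ 2 = ‖v‖ ^ p := by
    rw [← Real.rpow_add_natCast' (norm_nonneg v) (by norm_num; exact hp₀.ne')]
    norm_num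
  have hpow : κ ^ (p - 2) * κ = κ ^ (p - 1) := by
    rw [← Real.rpow_add_one hκ.ne']
    ring_nf
  have htangent := norm_rpow_add_inner_sub_le hp (κ • v) (v + c)
  rw [norm_smul, Real.norm_of_nonneg hκ.le, Real.mul_rpow hκ.le (norm_nonneg v),
    Real.mul_rpow hκ.le (norm_nonneg v), inner_sub_right, inner_add_right,
    real_inner_smul_left, real_inner_smul_left, real_inner_self_eq_norm_sq,
    real_inner_self_eq_norm_sq, norm_smul, Real.norm_of_nonneg hκ.le] at htangent
  calc κ ^ p * ‖v‖ ^ p + κ ^ (p - 1) * (‖v‖ ^ p + p * ‖v‖ ^ (p - 2) * ⟪v, c⟫)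
      = κ ^ p * ‖v‖ ^ p + p * (κ ^ (p - 2) * ‖v‖ ^ (p - 2)) *
          (κ * ‖v‖ ^ 2 + κ * ⟪v, c⟫ - (κ * ‖v‖) ^ 2) := by
        rw [← hpow, ← hnorm]
        linear_combination (-(κ ^ (p - 2) * κ * (‖v‖ ^ (p - 2) * ‖v‖ ^ 2))) * hpκ
    _ ≤ ‖v + c‖ ^ p := htangent

lemma fderiv_mul_norm_rpow_apply {p : ℝ} (hp : 1 < p) {d : E → ℝ} {v : E → F} {x w : E}
    (hd : DifferentiableAt ℝ d x) (hdw : fderiv ℝ d x w = 1) (hv : Differentiable ℝ v) :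
    fderiv ℝ (fun x => d x * ‖v x‖ ^ p) x w =
      ‖v x‖ ^ p + p * ‖v x‖ ^ (p - 2) * ⟪v x, d x • fderiv ℝ v x w⟫ := by
  rw [fderiv_fun_mul hd (hv.norm_rpow hp x), hv.fderiv_norm_rpow hp, real_inner_smul_right]
  simp only [add_apply, smul_apply, ContinuousLinearMap.comp_apply, coe_innerSL_apply, smul_eq_mul,
    hdw, mul_one]
  ring

lemma integrable_fderiv_apply [MeasurableSpace E] [OpensMeasurableSpace E] (μ : Measure E)
    [IsFiniteMeasureOnCompacts μ] {g : E → F} (hg : ContDiff ℝ 1 g) (hgc : HasCompactSupport g)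
    (w : E) : Integrable (fun x => fderiv ℝ g x w) μ :=
  ((hg.continuous_fderiv one_ne_zero).clm_apply continuous_const).integrable_of_hasCompactSupport
    (hgc.fderiv_apply ℝ w)

variable [FiniteDimensional ℝ E] [MeasurableSpace E] [BorelSpace E] (μ : Measure E)
  [μ.IsAddHaarMeasure]

lemma integral_fderiv_apply_eq_zero {g : E → ℝ} (hg : ContDiff ℝ 1 g) (hgc : HasCompactSupport g)
    (w : E) : ∫ x, fderiv ℝ g x w ∂μ = 0 := by
  simpa using integral_mul_fderiv_eq_neg_fderiv_mul_of_integrable (μ := μ) (f := fun _ => (1 : ℝ))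
    (g := g) (v := w) (by simp) (by simpa using integrable_fderiv_apply μ hg hgc w)
    (by simpa using hg.continuous.integrable_of_hasCompactSupport hgc)
    (fun _ _ => differentiableAt_const _) (fun x _ => hg.differentiable one_ne_zero x)

variable {d : E → ℝ} {w : E}

theorem hardy_ground_state {p : ℝ} (hp : 1 < p) (hd : ContDiff ℝ 1 d)
    (hdw : ∀ x, fderiv ℝ d x w = 1) {v : E → F} (hv : ContDiff ℝ 1 v) (hvc : HasCompactSupport v) :
    ((p - 1) / p) ^ p * ∫ x, ‖v x‖ ^ p ∂μ ≤ ∫ x, ‖v x + d x • fderiv ℝ v x w‖ ^ p ∂μ := by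
  have hp₀ : 0 < p := one_pos.trans hp
  set g : E → ℝ := fun x => d x * ‖v x‖ ^ p
  have hvp : ContDiff ℝ 1 fun x => ‖v x‖ ^ p := hv.norm_rpow hp
  have hvpc : HasCompactSupport fun x => ‖v x‖ ^ p :=
    hvc.comp_left (g := fun z => ‖z‖ ^ p) (by simp [hp₀.ne'])
  have hg : ContDiff ℝ 1 g := hd.mul hvp
  have hgc : HasCompactSupport g := hvpc.mul_left
  have hvderiv : Continuous fun x => fderiv ℝ v x w :=
    (hv.continuous_fderiv one_ne_zero).clm_apply continuous_const
  have hL : Integrable (fun x => ‖v x‖ ^ p) μ :=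
    hvp.continuous.integrable_of_hasCompactSupport hvpc
  have hG : Integrable (fun x => fderiv ℝ g x w) μ := integrable_fderiv_apply μ hg hgc w
  have hR : Integrable (fun x => ‖v x + d x • fderiv ℝ v x w‖ ^ p) μ :=
    ((hv.continuous.add (hd.continuous.smul hvderiv)).norm.rpow_const
      fun _ => Or.inr hp₀.le).integrable_of_hasCompactSupport <|
      (hvc.add (hvc.fderiv_apply ℝ w).smul_left).comp_left (g := fun z => ‖z‖ ^ p)
        (by simp [hp₀.ne'])
  calc ((p - 1) / p) ^ p * ∫ x, ‖v x‖ ^ p ∂μ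
      = ∫ x, (((p - 1) / p) ^ p * ‖v x‖ ^ p + ((p - 1) / p) ^ (p - 1) * fderiv ℝ g x w) ∂μ := by
        rw [integral_add (hL.const_mul _) (hG.const_mul _), integral_const_mul,
          integral_const_mul, integral_fderiv_apply_eq_zero μ hg hgc w, mul_zero, add_zero]
    _ ≤ ∫ x, ‖v x + d x • fderiv ℝ v x w‖ ^ p ∂μ :=
        integral_mono ((hL.const_mul _).add (hG.const_mul _)) hR fun x => by
          rw [fderiv_mul_norm_rpow_apply hp (hd.differentiable one_ne_zero x) (hdw x)
            (hv.differentiable one_ne_zero)]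
          exact hardy_pointwise_s5 hp (v x) (d x • fderiv ℝ v x w)

theorem hardy_directional {p : ℝ} (hp : 1 < p) (hd : ContDiff ℝ 1 d)
    (hdw : ∀ x, fderiv ℝ d x w = 1) {u : E → F} (hu : ContDiff ℝ 1 u) (huc : HasCompactSupport u)
    {s : Set E} (hus : tsupport u ⊆ s) (hds : ∀ x ∈ s, d x ≠ 0) :
    ((p - 1) / p) ^ p * ∫ x in s, ‖u x‖ ^ p / |d x| ^ p ∂μ ≤ ∫ x in s, ‖fderiv ℝ u x w‖ ^ p ∂μ := by
  set v : E → F := fun x => (d x)⁻¹ • u x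
  have hv : ContDiff ℝ 1 v := contDiff_iff_contDiffAt.2 fun x => by
    by_cases hx : x ∈ tsupport u
    · exact (hd.contDiffAt.inv (hds x (hus hx))).smul hu.contDiffAt
    · refine (contDiffAt_const (c := (0 : F))).congr_of_eventuallyEq ?_
      filter_upwards [notMem_tsupport_iff_eventuallyEq.1 hx] with y hy
      simp [v, hy]
  have huv : u = fun x => d x • v x := funext fun x => by
    by_cases hx : d x = 0
    · simp [hx, image_eq_zero_of_notMem_tsupport fun h => hds x (hus h) hx]
    · simp [v, smul_inv_smul₀ hx]
  have hu' (x : E) : fderiv ℝ u x w = v x + d x • fderiv ℝ v x w := by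
    rw [huv, fderiv_fun_smul (hd.differentiable one_ne_zero x) (hv.differentiable one_ne_zero x)]
    simp [hdw, add_comm]
  have hnorm (x : E) : ‖v x‖ ^ p = ‖u x‖ ^ p / |d x| ^ p := by
    rw [norm_smul, norm_inv, Real.norm_eq_abs, inv_mul_eq_div,
      Real.div_rpow (norm_nonneg _) (abs_nonneg _)]
  have hp₀ : p ≠ 0 := (one_pos.trans hp).ne'
  rw [setIntegral_eq_integral_of_forall_compl_eq_zero fun x hx => by
      simp [image_eq_zero_of_notMem_tsupport fun h => hx (hus h), hp₀],
    setIntegral_eq_integral_of_forall_compl_eq_zero fun x hx => by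
      simp [fderiv_of_notMem_tsupport ℝ fun h => hx (hus h), hp₀]]
  simpa only [hu', hnorm] using hardy_ground_state μ hp hd hdw hv huc.smul_left

end Hardy

/-- An asymmetric norm: a convex, positively homogeneous function that is positive away from the
origin. Unlike `IsFinslerNorm` it need be neither even nor smooth. -/
structure IsAsymmetricNorm {E : Type*} [AddCommGroup E] [Module ℝ E] (H : E → ℝ) : Prop where
  convexOn : ConvexOn ℝ univ H
  smul_of_pos : ∀ ⦃t : ℝ⦄, 0 < t → ∀ x, H (t • x) = t * H x
  pos : ∀ ⦃x⦄, x ≠ 0 → 0 < H x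

lemma IsFinslerNorm.isAsymmetricNorm {N : ℕ} {H : Euc N → ℝ} (hH : IsFinslerNorm H) :
    IsAsymmetricNorm H where
  convexOn := hH.convexOn
  smul_of_pos t ht x := by rw [hH.homog, abs_of_pos ht]
  pos x hx := by
    obtain ⟨a, b, ha, -, hbounds⟩ := hH.bounds
    exact (mul_pos ha (norm_pos_iff.2 hx)).trans_le (hbounds x).1

lemma IsFinslerNorm.differentiableAt {N : ℕ} {H : Euc N → ℝ} (hH : IsFinslerNorm H) {ξ : Euc N}
    (hξ : ξ ≠ 0) : DifferentiableAt ℝ H ξ :=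
  (hH.smooth.differentiableOn two_ne_zero).differentiableAt (isOpen_compl_singleton.mem_nhds hξ)

/-- The anisotropic distance `inf_{y ∈ S} H⁰(x - y)` from `x` to the set `S`. -/
def polarDist {N : ℕ} (H : Euc N → ℝ) (S : Set (Euc N)) (x : Euc N) : ℝ :=
  sInf {r : ℝ | ∃ y : Euc N, y ∈ S ∧ r = polarNorm H (x - y)}

namespace IsAsymmetricNorm

section Normed

variable {E : Type*} [NormedAddCommGroup E] [NormedSpace ℝ E] {H : E → ℝ} {x : E}

lemma fderiv_apply_self (hH : IsAsymmetricNorm H) (hd : DifferentiableAt ℝ H x) :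
    fderiv ℝ H x x = H x := by
  have hray : HasDerivAt (fun t : ℝ => H (t • x)) (fderiv ℝ H x x) 1 := by
    have hsmul : HasDerivAt (fun t : ℝ => t • x) x 1 := by
      simpa using (hasDerivAt_id (1 : ℝ)).smul_const x
    exact (by simpa using hd.hasFDerivAt :
      HasFDerivAt H (fderiv ℝ H x) ((1 : ℝ) • x)).comp_hasDerivAt 1 hsmul
  have hlinear : HasDerivAt (fun t : ℝ => t * H x) (H x) 1 := hasDerivAt_mul_const (H x)
  refine hray.unique (hlinear.congr_of_eventuallyEq ?_)
  filter_upwards [lt_mem_nhds one_pos] with t ht using hH.smul_of_pos ht x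

lemma fderiv_apply_le (hH : IsAsymmetricNorm H) (hd : DifferentiableAt ℝ H x) (y : E) :
    fderiv ℝ H x y ≤ H y := by
  have h := add_fderiv_sub_le_of_convexOn hH.convexOn hd y
  rw [map_sub, hH.fderiv_apply_self hd] at h
  linarith

lemma fderiv_smul_of_pos (hH : IsAsymmetricNorm H) {t : ℝ} (ht : 0 < t) (x : E) :
    fderiv ℝ H (t • x) = fderiv ℝ H x := by
  have hcomp : (fun y => H (t • y)) = t • H := funext fun y => hH.smul_of_pos ht y
  refine smul_right_injective _ ht.ne' ?_
  beta_reduce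
  rw [← fderiv_comp_smul, hcomp, fderiv_const_smul_field, Pi.smul_apply]

end Normed

section Gradient

variable {E : Type*} [NormedAddCommGroup E] [InnerProductSpace ℝ E] [CompleteSpace E]
  {H : E → ℝ} {x : E}

lemma inner_gradient_self (hH : IsAsymmetricNorm H) (hd : DifferentiableAt ℝ H x) :
    ⟪x, gradient H x⟫ = H x := by
  rw [real_inner_comm, inner_gradient_left, hH.fderiv_apply_self hd]

lemma gradient_smul_of_pos (hH : IsAsymmetricNorm H) {t : ℝ} (ht : 0 < t) (x : E) :
    gradient H (t • x) = gradient H x := by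
  simp only [gradient, hH.fderiv_smul_of_pos ht]

end Gradient

variable {N : ℕ} {H : Euc N → ℝ} {ν : Euc N}

lemma bddAbove_inner_div (hH : IsAsymmetricNorm H) (x : Euc N) :
    BddAbove {r : ℝ | ∃ ξ : Euc N, ξ ≠ 0 ∧ r = ⟪ξ, x⟫ / H ξ} := by
  have hcont : ContinuousOn (fun ξ : Euc N => ⟪ξ, x⟫ / H ξ) (Metric.sphere 0 1) :=
    ContinuousOn.div (by fun_prop) hH.convexOn.locallyLipschitz.continuous.continuousOn
      fun ξ hξ => (hH.pos (ne_zero_of_mem_unit_sphere ⟨ξ, hξ⟩)).ne'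
  refine ((isCompact_sphere 0 1).bddAbove_image hcont).mono ?_
  rintro _ ⟨ξ, hξ, rfl⟩
  have hnorm : 0 < ‖ξ‖⁻¹ := inv_pos.2 (norm_pos_iff.2 hξ)
  refine ⟨‖ξ‖⁻¹ • ξ, by simp [norm_smul, hξ], ?_⟩
  beta_reduce
  rw [hH.smul_of_pos hnorm, real_inner_smul_left, mul_div_mul_left _ _ hnorm.ne']

lemma inner_div_le_polarNorm (hH : IsAsymmetricNorm H) (hν : ν ≠ 0) (x : Euc N) :
    ⟪ν, x⟫ / H ν ≤ polarNorm H x :=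
  le_csSup (hH.bddAbove_inner_div x) ⟨ν, hν, rfl⟩

lemma polarNorm_smul_gradient_le (hH : IsAsymmetricNorm H) (hd : DifferentiableAt ℝ H ν) {t : ℝ}
    (ht : 0 ≤ t) : polarNorm H (t • gradient H ν) ≤ t := by
  refine Real.sSup_le ?_ ht
  rintro _ ⟨ξ, hξ, rfl⟩
  rw [div_le_iff₀ (hH.pos hξ), real_inner_smul_right, real_inner_comm, inner_gradient_left]
  exact mul_le_mul_of_nonneg_left (hH.fderiv_apply_le hd ξ) ht

lemma polarDist_hyperplane (hH : IsAsymmetricNorm H) (hν : ν ≠ 0) (hd : DifferentiableAt ℝ H ν)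
    {x : Euc N} (hx : 0 ≤ ⟪ν, x⟫) : polarDist H {y | ⟪ν, y⟫ = 0} x = ⟪ν, x⟫ / H ν := by
  have hHν := hH.pos hν
  have hlower : ⟪ν, x⟫ / H ν ∈ lowerBounds
      {r : ℝ | ∃ y : Euc N, y ∈ {y | ⟪ν, y⟫ = 0} ∧ r = polarNorm H (x - y)} := by
    rintro _ ⟨y, hy : ⟪ν, y⟫ = 0, rfl⟩
    simpa [inner_sub_right, hy] using hH.inner_div_le_polarNorm hν (x - y)
  -- The foot point: flow from `x` along `-∇H(ν)` until the hyperplane is reached.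
  set t := ⟪ν, x⟫ / H ν with ht
  have hfoot : ⟪ν, x - t • gradient H ν⟫ = 0 := by
    rw [inner_sub_right, real_inner_smul_right, hH.inner_gradient_self hd, ht,
      div_mul_cancel₀ _ hHν.ne', sub_self]
  refine le_antisymm ?_ (le_csInf ⟨_, _, hfoot, rfl⟩ hlower)
  calc polarDist H {y | ⟪ν, y⟫ = 0} x
      ≤ polarNorm H (x - (x - t • gradient H ν)) := csInf_le ⟨_, hlower⟩ ⟨_, hfoot, rfl⟩
    _ = polarNorm H (t • gradient H ν) := by rw [sub_sub_cancel]
    _ ≤ t := hH.polarNorm_smul_gradient_le hd (div_nonneg hx hHν.le)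

lemma gradient_polarDist_hyperplane (hH : IsAsymmetricNorm H) (hν : ν ≠ 0)
    (hd : DifferentiableAt ℝ H ν) {x : Euc N} (hx : 0 < ⟪ν, x⟫) :
    gradient (polarDist H {y | ⟪ν, y⟫ = 0}) x = (H ν)⁻¹ • ν := by
  have hlinear : HasGradientAt (fun y => ⟪(H ν)⁻¹ • ν, y⟫) ((H ν)⁻¹ • ν) x :=
    hasGradientAt_iff_hasFDerivAt.2 (InnerProductSpace.toDual ℝ (Euc N) _).hasFDerivAt
  refine (hlinear.congr_of_eventuallyEq ?_).gradient
  have hopen : IsOpen {y : Euc N | 0 < ⟪ν, y⟫} := isOpen_lt continuous_const (by fun_prop)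
  filter_upwards [hopen.mem_nhds hx] with y hy
  rw [hH.polarDist_hyperplane hν hd (le_of_lt hy), real_inner_smul_left, inv_mul_eq_div]

end IsAsymmetricNorm

theorem finsler_hardy_halfspace_general {N : ℕ} {H : Euc N → ℝ} (hH : IsAsymmetricNorm H)
    {ν : Euc N} (hν : ν ≠ 0) (hHd : DifferentiableAt ℝ H ν) {p : ℝ} (hp : 1 < p) {u : Euc N → ℝ}
    (hu : ContDiff ℝ 1 u) (huc : HasCompactSupport u) (hsupp : tsupport u ⊆ {x | 0 < ⟪ν, x⟫}) :
    ((p - 1) / p) ^ p *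
        ∫ x in {x | 0 < ⟪ν, x⟫}, |u x| ^ p / polarDist H {y | ⟪ν, y⟫ = 0} x ^ p
      ≤ ∫ x in {x | 0 < ⟪ν, x⟫},
          |⟪gradient u x, gradient H (gradient (polarDist H {y | ⟪ν, y⟫ = 0}) x)⟫| ^ p := by
  have hHν : 0 < H ν := hH.pos hν
  have hmeas : MeasurableSet {x : Euc N | 0 < ⟪ν, x⟫} :=
    (isOpen_lt continuous_const (by fun_prop)).measurableSet
  set d : Euc N →L[ℝ] ℝ := innerSL ℝ ((H ν)⁻¹ • ν) with hd_def
  have hd (x : Euc N) : d x = ⟪ν, x⟫ / H ν := by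
    rw [hd_def, innerSL_apply_apply, real_inner_smul_left, inv_mul_eq_div]
  have hd_pos : ∀ x ∈ {x : Euc N | 0 < ⟪ν, x⟫}, 0 < d x := fun x hx =>
    (div_pos hx hHν).trans_eq (hd x).symm
  have hdw : d (gradient H ν) = 1 := by
    rw [hd, hH.inner_gradient_self hHd, div_self hHν.ne']
  have hardy := hardy_directional volume hp d.contDiff (w := gradient H ν)
    (fun x => by rw [d.fderiv, hdw]) hu huc hsupp fun x hx => (hd_pos x hx).ne'
  convert hardy using 1
  · congr 1
    refine setIntegral_congr_fun hmeas fun x hx => ?_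
    simp only [hH.polarDist_hyperplane hν hHd (le_of_lt hx), ← hd, abs_of_pos (hd_pos x hx),
      Real.norm_eq_abs]
  · refine setIntegral_congr_fun hmeas fun x hx => ?_
    simp only [hH.gradient_polarDist_hyperplane hν hHd hx,
      hH.gradient_smul_of_pos (inv_pos.2 hHν), inner_gradient_left, Real.norm_eq_abs]

/-- Anisotropic Hardy inequality on the half-space. -/
theorem finsler_hardy_halfspace
    (N : ℕ) (hN : 2 ≤ N) (H : Euc N → ℝ) (hH : IsFinslerNorm H)
    (p : ℝ) (hp : 1 < p)
    (halfspace : Set (Euc N))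
    (hhs : halfspace = {x : Euc N | 0 < x ⟨N - 1, by omega⟩})
    (dH : Euc N → ℝ)
    (hdH : ∀ x, dH x = sInf {r : ℝ | ∃ y : Euc N,
        y ⟨N - 1, by omega⟩ = 0 ∧ r = polarNorm H (x - y)})
    (u : Euc N → ℝ) (hu : IsTestFun halfspace u) :
    ((p - 1) / p) ^ p * ∫ x in halfspace, |u x| ^ p / dH x ^ p
      ≤ ∫ x in halfspace, |⟪gradient u x, gradient H (gradient dH x)⟫| ^ p := by
  set i : Fin N := ⟨N - 1, by omega⟩
  obtain rfl : dH = polarDist H {y | y i = 0} := funext hdH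
  have hν : EuclideanSpace.single i (1 : ℝ) ≠ 0 := by simp
  have hcoord (x : Euc N) : ⟪EuclideanSpace.single i 1, x⟫ = x i := by
    simp only [EuclideanSpace.inner_single_left, map_one, one_mul]
  simp only [hhs, ← hcoord] at hu ⊢
  exact finsler_hardy_halfspace_general hH.isAsymmetricNorm hν (hH.differentiableAt hν) hp
    (hu.1.of_le (by simp)) hu.2.1 hu.2.2
end
end
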